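/- Let p ∈ (1,2). For a compact set E ⊆ ℝ² define the variational p-capacity Cap_p(E) = inf { ∫_{ℝ²} ‖∇u(x)‖^p dx : u ∈ C_c^∞(ℝ²), u = 1 on E }. Then, for any regular hexagon H* with |H*| = 1, Cap_p(H*) ≤ Cap_p(H) for every H ∈ 𝓗 with |H| = 1; that is, among convex polygons of unit area that tile the plane by translations, the regular hexagon minimizes the variational p-capacity. -/

import Mathlib

open MeasureTheory Metric Filter Real Set
open scoped Topology ENNReal NNReal RealInnerProductSpace

noncomputable section

/-- The Euclidean plane. -/
abbrev E2 : Type := EuclideanSpace ℝ (Fin 2)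

/-- The line through `x` with direction `v`. -/
def lineThrough (x v : E2) : Set E2 := {y : E2 | ∃ t : ℝ, y = x + t • v}

/-- Steiner symmetrization of `A` with respect to the affine line `{x | ⟪x, v⟫ = c}`,
where `v` is a unit normal vector of the line. -/
def steiner (v : E2) (c : ℝ) (A : Set E2) : Set E2 :=
  {y : E2 | ∃ x : E2, ⟪x, v⟫ = c ∧ (A ∩ lineThrough x v).Nonempty ∧
    ∃ r : ℝ, y = x + r • v ∧
      ENNReal.ofReal (2 * |r|) ≤ μH[1] (A ∩ lineThrough x v)}

/-- The class `𝓗` of centrally symmetric convex hexagons (possibly degenerated to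
parallelograms), i.e. the convex polygons tiling the plane by translations. -/
def Hex (H : Set E2) : Prop :=
  (∃ x₀ p q r : E2, H = (fun y => x₀ + y) '' convexHull ℝ ({p, q, r, -p, -q, -r} : Set E2)) ∧
  (interior H).Nonempty

/-- The `k`-th vertex of the standard regular hexagon. -/
def hexVertex (k : ℕ) : E2 :=
  (WithLp.equiv 2 (Fin 2 → ℝ)).symm ![Real.cos (k * π / 3), Real.sin (k * π / 3)]

/-- The standard regular hexagon, with vertices `(cos (kπ/3), sin (kπ/3))`, `k = 0, …, 5`. -/
def stdHexagon : Set E2 := convexHull ℝ (Set.range fun k : Fin 6 => hexVertex k)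

/-- A similarity of the plane (composition of a rotation, a dilation and a translation,
possibly with a reflection). -/
def IsSimilarity (f : E2 → E2) : Prop :=
  ∃ s : ℝ, 0 < s ∧ ∀ x y, dist (f x) (f y) = s * dist x y

/-- A regular hexagon is any image of the standard one under a similarity. -/
def IsRegularHexagon (H : Set E2) : Prop := ∃ f : E2 → E2, IsSimilarity f ∧ H = f '' stdHexagon

/-- Convergence of a sequence of sets in the Hausdorff distance. -/
def HausdorffTendsto (Hn : ℕ → Set E2) (H : Set E2) : Prop :=
  Tendsto (fun n => EMetric.hausdorffEdist (Hn n) H) atTop (𝓝 0)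

/-- The planar cross product (determinant) of two vectors. -/
def det2 (u w : E2) : ℝ := u 0 * w 1 - u 1 * w 0

/-- `A, B, C, D, E, F` are (consecutive) vertices of the centrally symmetric hexagon `H`:
`H` is their convex hull, `D, E, F` are the antipodes of `A, B, C` with respect to a center
`o`, and `H` has nonempty interior. -/
def HexWithVertices (A B C D E F : E2) (H : Set E2) : Prop :=
  H = convexHull ℝ ({A, B, C, D, E, F} : Set E2) ∧
  (∃ o : E2, D = (2:ℝ) • o - A ∧ E = (2:ℝ) • o - B ∧ F = (2:ℝ) • o - C) ∧
  (interior H).Nonempty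

/-- The vertices `A, B, C, D, E, F` are listed in counterclockwise order. -/
def CCWList (A B C D E F : E2) : Prop :=
  0 ≤ det2 (B - A) (C - B) ∧ 0 ≤ det2 (C - B) (D - C) ∧ 0 ≤ det2 (D - C) (E - D) ∧
  0 ≤ det2 (E - D) (F - E) ∧ 0 ≤ det2 (F - E) (A - F) ∧ 0 ≤ det2 (A - F) (B - A)

/-- The six vertices are distinct and no three of them are collinear. -/
def NondegenerateHex (A B C D E F : E2) : Prop :=
  [A, B, C, D, E, F].Pairwise (· ≠ ·) ∧
  ∀ P Q R : E2, P ∈ ({A, B, C, D, E, F} : Set E2) → Q ∈ ({A, B, C, D, E, F} : Set E2) →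
    R ∈ ({A, B, C, D, E, F} : Set E2) → P ≠ Q → P ≠ R → Q ≠ R →
      ¬ Collinear ℝ ({P, Q, R} : Set E2)

/-- The variational `p`-capacity of `E ⊆ ℝ²`. -/
def pCapacity (p : ℝ) (E : Set E2) : ℝ :=
  sInf {t : ℝ | ∃ u : E2 → ℝ, ContDiff ℝ (⊤ : ℕ∞) u ∧ HasCompactSupport u ∧
    (∀ x ∈ E, u x = 1) ∧ t = ∫ x : E2, ‖fderiv ℝ u x‖ ^ p}

/-!
Polarization, the two-point rearrangement with respect to a hyperplane, preserves the Dirichlet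
energy, since almost everywhere the gradients of `max u v` and `min u v` are those of `u` and `v`
in some order. Polarizing in successive parallel hyperplanes concentrates the centres of the chords
of a hexagon, all at once, near a common hyperplane, so Steiner symmetrization does not increase
the capacity.

Symmetrizing a centrally symmetric hexagon along a diagonal `2 • e` that joins two vertices with a
common neighbour yields a hexagon symmetric in two orthogonal directions, with vertices `±(e - f)`,
`±(e + f)` and `±t • f`. Repeating this along the diagonal from `e - f` to `t • f` replaces
`x = ‖e‖ ^ 2` by `(x + M ^ 2 / x) / 4`, where `2 * M` is the area, and `σ = (1 + t)⁻¹` by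
`(1 - σ) / 2`. Both maps are contractions, the first one for `x ≥ M / 2`, and their fixed points
`M / √3` and `1 / 3` are the values of the regular hexagon of the same area. So for every `c > 1`
the regular hexagon shrunk by the factor `c` eventually fits into a congruent copy of the
symmetrized ones. As shrinking by `c` divides the capacity by `c ^ (2 - p)`, letting `c` tend to
`1` compares the capacities.
-/

lemma le_of_forall_one_lt_le_rpow_mul {q a b : ℝ} (h : ∀ c : ℝ, 1 < c → a ≤ c ^ q * b) :
    a ≤ b := by
  have hlim : Tendsto (fun c : ℝ => c ^ q * b) (𝓝[>] 1) (𝓝 ((1 : ℝ) ^ q * b)) :=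
    ((Real.continuousAt_rpow_const 1 q (Or.inl one_ne_zero)).mul
      continuousAt_const).tendsto.mono_left nhdsWithin_le_nhds
  rw [Real.one_rpow, one_mul] at hlim
  exact ge_of_tendsto hlim (eventually_mem_nhdsWithin.mono h)

section Energy

variable {E : Type*} [NormedAddCommGroup E] [NormedSpace ℝ E] [MeasureSpace E] {p : ℝ}

/-- The `p`-Dirichlet energy `∫ ‖∇u‖ ^ p`. -/
def dirichletEnergy (p : ℝ) (u : E → ℝ) : ℝ := ∫ x, ‖fderiv ℝ u x‖ ^ p

lemma dirichletEnergy_nonneg (p : ℝ) (u : E → ℝ) : 0 ≤ dirichletEnergy p u :=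
  integral_nonneg fun _ => by positivity

lemma dirichletEnergy_const_mul {c : ℝ} (hc : 0 ≤ c) (u : E → ℝ) :
    dirichletEnergy p (fun x => c * u x) = c ^ p * dirichletEnergy p u := by
  have hfderiv (x : E) : fderiv ℝ (fun x => c * u x) x = c • fderiv ℝ u x :=
    congrFun (fderiv_const_smul_field (𝕜 := ℝ) (f := u) c) x
  simp only [dirichletEnergy, hfderiv, norm_smul, Real.norm_of_nonneg hc,
    Real.mul_rpow hc (norm_nonneg _), integral_const_mul]

/-- The variational `p`-capacity in a normed space with a volume; in the plane it is
`pCapacity`. -/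
def variationalCapacity (p : ℝ) (K : Set E) : ℝ :=
  sInf {t | ∃ u : E → ℝ, ContDiff ℝ (⊤ : ℕ∞) u ∧ HasCompactSupport u ∧
    (∀ x ∈ K, u x = 1) ∧ t = dirichletEnergy p u}

lemma variationalCapacity_le_dirichletEnergy {K : Set E} {u : E → ℝ}
    (hu : ContDiff ℝ (⊤ : ℕ∞) u) (hc : HasCompactSupport u) (hK : ∀ x ∈ K, u x = 1) :
    variationalCapacity p K ≤ dirichletEnergy p u := by
  refine csInf_le ⟨0, ?_⟩ ⟨u, hu, hc, hK, rfl⟩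
  rintro _ ⟨v, -, -, -, rfl⟩
  exact dirichletEnergy_nonneg p v

lemma le_variationalCapacity [FiniteDimensional ℝ E] {c : ℝ} {K : Set E}
    (hK : Bornology.IsBounded K)
    (h : ∀ u : E → ℝ, ContDiff ℝ (⊤ : ℕ∞) u → HasCompactSupport u → (∀ x ∈ K, u x = 1) →
      c ≤ dirichletEnergy p u) :
    c ≤ variationalCapacity p K := by
  refine le_csInf ?_ ?_
  · obtain ⟨R, hR₀, hR⟩ := hK.subset_closedBall_lt 0 0
    let φ : ContDiffBump (0 : E) := ⟨R, R + 1, hR₀, lt_add_one R⟩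
    exact ⟨_, φ, φ.contDiff, φ.hasCompactSupport,
      fun x hx => φ.one_of_mem_closedBall (hR hx), rfl⟩
  · rintro _ ⟨u, hu, hc, hu₁, rfl⟩
    exact h u hu hc hu₁

variable [BorelSpace E]

lemma measurable_norm_fderiv_rpow (p : ℝ) (u : E → ℝ) :
    Measurable fun x => ‖fderiv ℝ u x‖ ^ p :=
  (measurable_fderiv ℝ u).norm.pow_const p

variable [(volume : Measure E).IsAddHaarMeasure] {w : E → ℝ} {L : ℝ≥0}

lemma integrable_norm_fderiv_rpow (hp : 0 < p) (hw : LipschitzWith L w)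
    (hc : HasCompactSupport w) : Integrable fun x => ‖fderiv ℝ w x‖ ^ p := by
  have hsupport : Function.support (fun x => ‖fderiv ℝ w x‖ ^ p) ⊆ tsupport (fderiv ℝ w) := by
    refine fun x hx => subset_tsupport _ fun h₀ => hx ?_
    simp only [h₀, norm_zero, Real.zero_rpow hp.ne']
  rw [← integrableOn_iff_integrable_of_support_subset hsupport]
  refine Measure.integrableOn_of_bounded (M := (L : ℝ) ^ p)
    (hc.fderiv ℝ).isCompact.measure_lt_top.ne
    (measurable_norm_fderiv_rpow p w).aestronglyMeasurable (ae_of_all _ fun x => ?_)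
  rw [Real.norm_of_nonneg (by positivity)]
  exact Real.rpow_le_rpow (norm_nonneg _) (norm_fderiv_le_of_lipschitz ℝ hw) hp.le

lemma dirichletEnergy_min_one_le (hp : 0 < p) (hw : LipschitzWith L w)
    (hc : HasCompactSupport w) :
    dirichletEnergy p (fun x => min 1 (w x)) ≤ dirichletEnergy p w := by
  refine integral_mono_of_nonneg (ae_of_all _ fun x => by positivity)
    (integrable_norm_fderiv_rpow hp hw hc) (ae_of_all _ fun x => ?_)
  refine Real.rpow_le_rpow (norm_nonneg _) ?_ hp.le
  rcases lt_or_ge (w x) 1 with h | h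
  · have hnear : (fun x => min 1 (w x)) =ᶠ[𝓝 x] w := by
      filter_upwards [hw.continuous.continuousAt.eventually_lt continuousAt_const h] with y hy
      exact min_eq_right hy.le
    rw [hnear.fderiv_eq]
  · have hmax : IsLocalMax (fun x => min 1 (w x)) x := by
      refine Eventually.of_forall fun y => ?_
      simpa only [min_eq_left h] using min_le_left 1 (w y)
    rw [hmax.fderiv_eq_zero, norm_zero]
    exact norm_nonneg _

variable [FiniteDimensional ℝ E]

section Average

variable {μ : Measure E} [IsProbabilityMeasure μ]

lemma hasFDerivAt_integral_comp_sub (hw : LipschitzWith L w) (hc : HasCompactSupport w)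
    (hμ : μ ≪ volume) (x : E) :
    HasFDerivAt (fun x => ∫ t, w (x - t) ∂μ) (∫ t, fderiv ℝ w (x - t) ∂μ) x := by
  obtain ⟨C, hC⟩ := hc.exists_bound_of_continuous hw.continuous
  have hmeas (y : E) : AEStronglyMeasurable (fun t => w (y - t)) μ :=
    (hw.continuous.comp (continuous_const.sub continuous_id)).aestronglyMeasurable
  refine (hasFDerivAt_integral_of_dominated_loc_of_lip (s := univ) (bound := fun _ => (L : ℝ))
    univ_mem (Eventually.of_forall hmeas) (.of_bound (hmeas x) C (ae_of_all _ fun t => hC _))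
    ((measurable_fderiv ℝ w).comp (measurable_const.sub measurable_id)).aestronglyMeasurable
    (ae_of_all _ fun t => ?_) (integrable_const _) ?_).2
  · simp only [Real.nnabs_coe]
    refine (LipschitzWith.of_dist_le_mul fun y z => ?_).lipschitzOnWith
    simpa only [dist_sub_right] using hw.dist_le_mul (y - t) (z - t)
  · have hdiff : ∀ᵐ t : E, DifferentiableAt ℝ w (x - t) :=
      (Measure.measurePreserving_sub_left volume x).quasiMeasurePreserving.ae
        hw.ae_differentiableAt
    filter_upwards [hμ.ae_le hdiff] with t ht
    exact ht.hasFDerivAt.comp x ((hasFDerivAt_id x).sub_const t)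

lemma norm_fderiv_integral_comp_sub_rpow_le (hp : 1 ≤ p) (hw : LipschitzWith L w)
    (hc : HasCompactSupport w) (hμ : μ ≪ volume) (x : E) :
    ‖fderiv ℝ (fun x => ∫ t, w (x - t) ∂μ) x‖ ^ p ≤ ∫ t, ‖fderiv ℝ w (x - t)‖ ^ p ∂μ := by
  have hp₀ : 0 ≤ p := zero_le_one.trans hp
  have hbound (t : E) : ‖fderiv ℝ w (x - t)‖ ≤ L := norm_fderiv_le_of_lipschitz ℝ hw
  have hmeas : Measurable fun t => ‖fderiv ℝ w (x - t)‖ :=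
    ((measurable_fderiv ℝ w).comp (measurable_const.sub measurable_id)).norm
  rw [(hasFDerivAt_integral_comp_sub hw hc hμ x).fderiv]
  calc ‖∫ t, fderiv ℝ w (x - t) ∂μ‖ ^ p ≤ (∫ t, ‖fderiv ℝ w (x - t)‖ ∂μ) ^ p :=
        Real.rpow_le_rpow (norm_nonneg _) (norm_integral_le_integral_norm _) hp₀
    _ ≤ ∫ t, ‖fderiv ℝ w (x - t)‖ ^ p ∂μ := by
        refine (convexOn_rpow hp).map_integral_le
          (Real.continuous_rpow_const hp₀).continuousOn isClosed_Ici
          (ae_of_all _ fun t => norm_nonneg _)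
          (.of_bound hmeas.aestronglyMeasurable L (ae_of_all _ fun t => ?_))
          (.of_bound (hmeas.pow_const p).aestronglyMeasurable ((L : ℝ) ^ p)
            (ae_of_all _ fun t => ?_))
        · simpa only [norm_norm] using hbound t
        · exact (Real.norm_of_nonneg (Real.rpow_nonneg (norm_nonneg _) p)).trans_le
            (Real.rpow_le_rpow (norm_nonneg _) (hbound t) hp₀)

lemma dirichletEnergy_integral_comp_sub_le (hp : 1 ≤ p) (hw : LipschitzWith L w)
    (hc : HasCompactSupport w) (hμ : μ ≪ volume) :
    dirichletEnergy p (fun x => ∫ t, w (x - t) ∂μ) ≤ dirichletEnergy p w := by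
  have hint := integrable_norm_fderiv_rpow (zero_lt_one.trans_le hp) hw hc
  have hprod : Integrable (fun z : E × E => ‖fderiv ℝ w (z.1 - z.2)‖ ^ p) (volume.prod μ) := by
    refine (integrable_prod_iff' ((measurable_norm_fderiv_rpow p w).comp
      (measurable_fst.sub measurable_snd)).aestronglyMeasurable).2
      ⟨ae_of_all _ fun t => hint.comp_sub_right t, ?_⟩
    refine (integrable_const (∫ x, ‖‖fderiv ℝ w x‖ ^ p‖)).congr (ae_of_all _ fun t => ?_)
    exact (integral_sub_right_eq_self (fun x => ‖‖fderiv ℝ w x‖ ^ p‖) t).symm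
  calc dirichletEnergy p (fun x => ∫ t, w (x - t) ∂μ)
      ≤ ∫ x : E, ∫ t, ‖fderiv ℝ w (x - t)‖ ^ p ∂μ :=
        integral_mono_of_nonneg (ae_of_all _ fun _ => Real.rpow_nonneg (norm_nonneg _) _)
          hprod.integral_prod_left
          (ae_of_all _ (norm_fderiv_integral_comp_sub_rpow_le hp hw hc hμ))
    _ = ∫ t, (∫ x : E, ‖fderiv ℝ w (x - t)‖ ^ p) ∂μ := integral_integral_swap hprod
    _ = ∫ _t, dirichletEnergy p w ∂μ :=
        integral_congr_ae (ae_of_all _ (integral_sub_right_eq_self (‖fderiv ℝ w ·‖ ^ p)))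
    _ = dirichletEnergy p w := by
        rw [integral_const, probReal_univ, one_smul]

end Average

lemma isProbabilityMeasure_withDensity_normed (φ : ContDiffBump (0 : E)) :
    IsProbabilityMeasure
      (volume.withDensity fun t => ENNReal.ofReal (φ.normed volume t)) := by
  refine ⟨?_⟩
  rw [withDensity_apply _ MeasurableSet.univ, Measure.restrict_univ,
    ← ofReal_integral_eq_lintegral_ofReal φ.integrable_normed
      (ae_of_all _ fun t => φ.nonneg_normed t), φ.integral_normed, ENNReal.ofReal_one]

lemma variationalCapacity_le_of_eq_one_near (hp : 1 ≤ p) (hw : LipschitzWith L w)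
    (hc : HasCompactSupport w) {K : Set E} {r : ℝ} (hr : 0 < r)
    (hK : ∀ x ∈ K, ∀ y ∈ ball x r, w y = 1) :
    variationalCapacity p K ≤ dirichletEnergy p w := by
  let φ : ContDiffBump (0 : E) := ⟨r / 2, r, half_pos hr, half_lt_self hr⟩
  let μ : Measure E := volume.withDensity fun t => ENNReal.ofReal (φ.normed volume t)
  have : IsProbabilityMeasure μ := isProbabilityMeasure_withDensity_normed φ
  have hconv : (fun x => ∫ t, w (x - t) ∂μ)
      = convolution (φ.normed volume) w (ContinuousLinearMap.lsmul ℝ ℝ) volume := by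
    ext x
    rw [convolution_def, integral_withDensity_eq_integral_toReal_smul
      φ.continuous_normed.measurable.ennreal_ofReal (ae_of_all _ fun _ => ENNReal.ofReal_lt_top)]
    simp only [ENNReal.toReal_ofReal (φ.nonneg_normed _), ContinuousLinearMap.lsmul_apply]
  refine le_trans ?_ (dirichletEnergy_integral_comp_sub_le hp hw hc
    (withDensity_absolutelyContinuous _ _ : μ ≪ volume))
  rw [hconv]
  refine variationalCapacity_le_dirichletEnergy
    (φ.hasCompactSupport_normed.contDiff_convolution_left _ φ.contDiff_normed
      hw.continuous.locallyIntegrable)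
    (φ.hasCompactSupport_normed.convolution _ hc) fun x hx => ?_
  have hwx : w x = 1 := hK x hx x (mem_ball_self hr)
  rw [φ.normed_convolution_eq_right fun y hy => (hK x hx y hy).trans hwx.symm, hwx]

lemma variationalCapacity_le_of_one_le (hp : 1 ≤ p) (hw : LipschitzWith L w)
    (hc : HasCompactSupport w) {K : Set E} (hK : ∀ x ∈ K, 1 ≤ w x) :
    variationalCapacity p K ≤ dirichletEnergy p w := by
  -- For `c > 1` the truncation `min 1 (c * w)` equals `1` on a whole neighbourhood of `K`.
  refine le_of_forall_one_lt_le_rpow_mul (q := p) fun c hc₁ => ?_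
  have hc₀ : 0 < c := zero_lt_one.trans hc₁
  have hcw : LipschitzWith (‖c‖₊ * L) (fun x => c * w x) := (lipschitzWith_smul c).comp hw
  have hcs : HasCompactSupport (fun x => c * w x) := hc.mul_left
  have hmin : LipschitzWith (‖c‖₊ * L) (fun x => min 1 (c * w x)) := by
    simpa only [max_self] using (LipschitzWith.const' (K := ‖c‖₊ * L) (1 : ℝ)).min hcw
  have hminc : HasCompactSupport (fun x => min 1 (c * w x)) :=
    hcs.comp_left (g := min 1) (min_eq_right zero_le_one)
  rw [← dirichletEnergy_const_mul hc₀.le]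
  refine le_trans ?_ (dirichletEnergy_min_one_le (zero_lt_one.trans_le hp) hcw hcs)
  have hL : 0 < c * (L + 1) := by positivity
  refine variationalCapacity_le_of_eq_one_near hp hmin hminc
    (div_pos (sub_pos.2 hc₁) hL) fun x hx y hy => min_eq_left ?_
  rw [mem_ball, lt_div_iff₀ hL] at hy
  have hdist : w x - w y ≤ L * dist y x :=
    (le_abs_self _).trans ((hw.dist_le_mul x y).trans_eq (by rw [dist_comm]))
  nlinarith [hK x hx, dist_nonneg (x := y) (y := x)]

end Energy

section Similarity

variable {E : Type*} [NormedAddCommGroup E] [InnerProductSpace ℝ E] {p k : ℝ}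

lemma norm_fderiv_comp_similarity (u : E → ℝ) (c : E) (hk : 0 < k) (T : E ≃ₗᵢ[ℝ] E) (x : E) :
    ‖fderiv ℝ (fun y => u (c + k • T y)) x‖ = k * ‖fderiv ℝ u (c + k • T x)‖ := by
  have hcomp : fderiv ℝ (fun y => u (c + k • T y)) x
      = (fderiv ℝ (fun z => u (c + k • z)) (T x)).comp (T : E →L[ℝ] E) :=
    T.toContinuousLinearEquiv.comp_right_fderiv (f := fun z => u (c + k • z)) (x := x)
  rw [hcomp, fderiv_comp_smul (f := fun z => u (c + z)), fderiv_comp_add_left,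
    ContinuousLinearMap.opNorm_comp_linearIsometryEquiv, norm_smul, Real.norm_of_nonneg hk.le]

variable [FiniteDimensional ℝ E] [MeasurableSpace E] [BorelSpace E]

lemma integral_comp_similarity (F : E → ℝ) (c : E) (hk : 0 < k) (T : E ≃ₗᵢ[ℝ] E) :
    ∫ x, F (c + k • T x) = (k ^ Module.finrank ℝ E)⁻¹ * ∫ x, F x := by
  rw [T.measurePreserving.integral_comp T.toMeasurableEquiv.measurableEmbedding
    (fun z => F (c + k • z)), Measure.integral_comp_smul volume (fun z => F (c + z)) k,
    integral_add_left_eq_self, abs_of_pos (by positivity), smul_eq_mul]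

lemma dirichletEnergy_comp_similarity (u : E → ℝ) (c : E) (hk : 0 < k) (T : E ≃ₗᵢ[ℝ] E) :
    dirichletEnergy p (fun y => u (c + k • T y))
      = k ^ (p - Module.finrank ℝ E) * dirichletEnergy p u := by
  simp only [dirichletEnergy, norm_fderiv_comp_similarity u c hk T,
    Real.mul_rpow hk.le (norm_nonneg _)]
  rw [integral_const_mul, integral_comp_similarity (fun x => ‖fderiv ℝ u x‖ ^ p) c hk T,
    Real.rpow_sub hk, Real.rpow_natCast, ← mul_assoc, div_eq_mul_inv]

lemma variationalCapacity_le_of_mapsTo {K K' : Set E} (hK : Bornology.IsBounded K) (c : E)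
    (hk : 0 < k) (T : E ≃ₗᵢ[ℝ] E) (h : MapsTo (fun y => c + k • T y) K' K) :
    variationalCapacity p K' ≤ k ^ (p - Module.finrank ℝ E) * variationalCapacity p K := by
  have hkp : 0 < k ^ (p - Module.finrank ℝ E) := Real.rpow_pos_of_pos hk _
  rw [← div_le_iff₀' hkp]
  refine le_variationalCapacity hK fun u hu hc h₁ => ?_
  rw [div_le_iff₀' hkp, ← dirichletEnergy_comp_similarity u c hk T]
  exact variationalCapacity_le_dirichletEnergy
    (hu.comp (contDiff_const.add (T.contDiff.const_smul k)))
    (hc.comp_homeomorph ((T.toHomeomorph.trans (Homeomorph.smulOfNeZero k hk.ne')).trans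
      (Homeomorph.addLeft c)))
    fun y hy => h₁ _ (h hy)

lemma variationalCapacity_image_add_left (p : ℝ) {K : Set E} (hK : Bornology.IsBounded K) (x : E) :
    variationalCapacity p ((x + ·) '' K) = variationalCapacity p K := by
  have hle {A B : Set E} (hA : Bornology.IsBounded A) (y : E) (h : MapsTo (y + ·) B A) :
      variationalCapacity p B ≤ variationalCapacity p A := by
    simpa only [Real.one_rpow, one_mul] using
      variationalCapacity_le_of_mapsTo (p := p) hA y one_pos (LinearIsometryEquiv.refl ℝ E)
        (fun z hz => by simpa only [one_smul] using! h hz)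
  refine le_antisymm (hle hK (-x) ?_)
    (hle ((isometry_add_left x).lipschitz.isBounded_image hK) x (mapsTo_image _ K))
  rintro _ ⟨y, hy, rfl⟩
  simpa only [neg_add_cancel_left] using hy

lemma volume_image_add_left (x : E) (K : Set E) : volume ((x + ·) '' K) = volume K := by
  rw [image_add_left, measure_preimage_add]

end Similarity

lemma norm_fderiv_rpow_max_add_min {E : Type*} [NormedAddCommGroup E] [NormedSpace ℝ E] (p : ℝ)
    {u v : E → ℝ} {x : E} (hu : DifferentiableAt ℝ u x) (hv : DifferentiableAt ℝ v x)
    (hmax : DifferentiableAt ℝ (fun y => max (u y) (v y)) x)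
    (hmin : DifferentiableAt ℝ (fun y => min (u y) (v y)) x) :
    ‖fderiv ℝ (fun y => max (u y) (v y)) x‖ ^ p + ‖fderiv ℝ (fun y => min (u y) (v y)) x‖ ^ p
      = ‖fderiv ℝ u x‖ ^ p + ‖fderiv ℝ v x‖ ^ p := by
  rcases lt_trichotomy (u x) (v x) with h | h | h
  · have hlt := hu.continuousAt.eventually_lt hv.continuousAt h
    have hmax_eq : (fun y => max (u y) (v y)) =ᶠ[𝓝 x] v := hlt.mono fun y hy => max_eq_right hy.le
    have hmin_eq : (fun y => min (u y) (v y)) =ᶠ[𝓝 x] u := hlt.mono fun y hy => min_eq_left hy.le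
    rw [hmax_eq.fderiv_eq, hmin_eq.fderiv_eq, add_comm]
  · have fderiv_eq_of_touching (f g : E → ℝ) (hf : DifferentiableAt ℝ f x)
        (hg : DifferentiableAt ℝ g x) (hle : ∀ y, g y ≤ f y) (heq : f x = g x) :
        fderiv ℝ f x = fderiv ℝ g x := by
      have hlocal : IsLocalMin (f - g) x := Eventually.of_forall fun y => by
        simp only [Pi.sub_apply, heq, sub_self, sub_nonneg, hle y]
      rw [← sub_eq_zero, ← fderiv_sub hf hg, hlocal.fderiv_eq_zero]
    rw [fderiv_eq_of_touching _ u hmax hu (fun y => le_max_left _ _) (by simp [h]),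
      ← fderiv_eq_of_touching v _ hv hmin (fun y => min_le_right _ _) (by simp [h])]
  · have hlt := hv.continuousAt.eventually_lt hu.continuousAt h
    have hmax_eq : (fun y => max (u y) (v y)) =ᶠ[𝓝 x] u := hlt.mono fun y hy => max_eq_left hy.le
    have hmin_eq : (fun y => min (u y) (v y)) =ᶠ[𝓝 x] v := hlt.mono fun y hy => min_eq_right hy.le
    rw [hmax_eq.fderiv_eq, hmin_eq.fderiv_eq]

lemma ae_linearMap_ne {E : Type*} [NormedAddCommGroup E] [NormedSpace ℝ E] [FiniteDimensional ℝ E]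
    [MeasurableSpace E] [BorelSpace E] (μ : Measure E) [μ.IsAddHaarMeasure] {f : E →ₗ[ℝ] ℝ}
    (hf : f ≠ 0) (s : ℝ) : ∀ᵐ x ∂μ, f x ≠ s := by
  have hlevel : {x | ¬ f x ≠ s} = (AffineSubspace.mk' s ⊥).comap f.toAffineMap := by
    ext x
    simp [sub_eq_zero]
  rw [ae_iff, hlevel]
  refine Measure.addHaar_affineSubspace μ _ fun htop => ?_
  have hconst (x : E) : f x = s := by
    simpa [sub_eq_zero] using htop.ge (AffineSubspace.mem_top ℝ E x)
  exact hf (LinearMap.ext fun x => by simpa [(map_zero f).symm.trans (hconst 0)] using hconst x)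

section Polarization

variable {E : Type*} [NormedAddCommGroup E] [InnerProductSpace ℝ E] {v : E} {s : ℝ}
  {u : E → ℝ} {L : ℝ≥0}

/-- The reflection in the hyperplane `⟪v, x⟫ = s`, for a unit vector `v`. -/
def hyperplaneReflection (v : E) (s : ℝ) (x : E) : E := (2 * s) • v + (ℝ ∙ v)ᗮ.reflection x

/-- The polarization (two-point rearrangement) of `u` in the hyperplane `⟪v, x⟫ = s`: it moves
the larger of the values at two mirror points to the side `⟪v, x⟫ ≤ s`. -/
def polarize (v : E) (s : ℝ) (u : E → ℝ) (x : E) : ℝ :=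
  if ⟪v, x⟫ ≤ s then max (u x) (u (hyperplaneReflection v s x))
  else min (u x) (u (hyperplaneReflection v s x))

lemma hyperplaneReflection_eq_add_smul (hv : ‖v‖ = 1) (s : ℝ) (x : E) :
    hyperplaneReflection v s x = x + (2 * (s - ⟪v, x⟫)) • v := by
  rw [hyperplaneReflection, Submodule.reflection_orthogonal_apply,
    Submodule.reflection_singleton_apply, hv]
  simp only [RCLike.ofReal_real_eq_id, id_eq, one_pow, div_one]
  module

lemma inner_hyperplaneReflection (hv : ‖v‖ = 1) (s : ℝ) (x : E) :
    ⟪v, hyperplaneReflection v s x⟫ = 2 * s - ⟪v, x⟫ := by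
  rw [hyperplaneReflection_eq_add_smul hv, inner_add_right, real_inner_smul_right,
    real_inner_self_eq_norm_sq, hv]
  ring

lemma hyperplaneReflection_hyperplaneReflection (hv : ‖v‖ = 1) (s : ℝ) (x : E) :
    hyperplaneReflection v s (hyperplaneReflection v s x) = x := by
  rw [hyperplaneReflection_eq_add_smul hv, inner_hyperplaneReflection hv,
    hyperplaneReflection_eq_add_smul hv]
  module

lemma isometry_hyperplaneReflection (v : E) (s : ℝ) : Isometry (hyperplaneReflection v s) :=
  (isometry_add_left ((2 * s) • v)).comp (LinearIsometryEquiv.isometry _)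

lemma dist_hyperplaneReflection_le (hv : ‖v‖ = 1) {x y : E} (hx : ⟪v, x⟫ ≤ s) (hy : s ≤ ⟪v, y⟫) :
    dist x (hyperplaneReflection v s y) ≤ dist x y := by
  refine (pow_le_pow_iff_left₀ dist_nonneg dist_nonneg two_ne_zero).1 ?_
  have hsub : x - hyperplaneReflection v s y = x - y - (2 * (s - ⟪v, y⟫)) • v := by
    rw [hyperplaneReflection_eq_add_smul hv]
    abel
  rw [dist_eq_norm, dist_eq_norm, hsub, norm_sub_sq_real, real_inner_smul_right, norm_smul, hv,
    mul_one, Real.norm_eq_abs, sq_abs, inner_sub_left, real_inner_comm v x,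
    real_inner_comm v y]
  nlinarith [mul_nonneg (sub_nonneg.2 hx) (sub_nonneg.2 hy)]

lemma lipschitzWith_comp_hyperplaneReflection (hu : LipschitzWith L u) (v : E) (s : ℝ) :
    LipschitzWith L (fun x => u (hyperplaneReflection v s x)) := by
  simpa only [mul_one, Function.comp_def] using
    hu.comp (isometry_hyperplaneReflection v s).lipschitz

lemma lipschitzWith_polarize (hv : ‖v‖ = 1) (hu : LipschitzWith L u) :
    LipschitzWith L (polarize v s u) := by
  have hσ := isometry_hyperplaneReflection v s
  have hmax := hu.max (lipschitzWith_comp_hyperplaneReflection hu v s)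
  have hmin := hu.min (lipschitzWith_comp_hyperplaneReflection hu v s)
  rw [max_self] at hmax hmin
  have across (x y : E) (hx : ⟪v, x⟫ ≤ s) (hy : s < ⟪v, y⟫) :
      |max (u x) (u (hyperplaneReflection v s x)) - min (u y) (u (hyperplaneReflection v s y))|
        ≤ L * dist x y := by
    have hclose (a b : E) (hab : dist a b ≤ dist x y) : |u a - u b| ≤ L * dist x y :=
      (hu.dist_le_mul a b).trans (mul_le_mul_of_nonneg_left hab L.coe_nonneg)
    have hx_σy := dist_hyperplaneReflection_le hv hx hy.le
    have hσx_y : dist (hyperplaneReflection v s x) y ≤ dist x y := by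
      rwa [← hσ.dist_eq, hyperplaneReflection_hyperplaneReflection hv]
    rcases max_choice (u x) (u (hyperplaneReflection v s x)) with h | h <;>
      rcases min_choice (u y) (u (hyperplaneReflection v s y)) with h' | h' <;> rw [h, h']
    exacts [hclose _ _ le_rfl, hclose _ _ hx_σy, hclose _ _ hσx_y, hclose _ _ (hσ.dist_eq x y).le]
  refine LipschitzWith.of_dist_le_mul fun x y => ?_
  unfold polarize
  split_ifs with hx hy hy
  · exact hmax.dist_le_mul x y
  · exact across x y hx (not_le.1 hy)
  · rw [dist_comm, dist_comm x]
    exact across y x hy (not_le.1 hx)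
  · exact hmin.dist_le_mul x y

lemma hasCompactSupport_polarize (hv : ‖v‖ = 1) (hc : HasCompactSupport u) :
    HasCompactSupport (polarize v s u) := by
  refine HasCompactSupport.intro (hc.isCompact.union
    (hc.isCompact.image (isometry_hyperplaneReflection v s).continuous)) fun x hx => ?_
  have hux : u x = 0 := image_eq_zero_of_notMem_tsupport fun h => hx (Or.inl h)
  have huσx : u (hyperplaneReflection v s x) = 0 := image_eq_zero_of_notMem_tsupport fun h =>
    hx (Or.inr ⟨_, h, hyperplaneReflection_hyperplaneReflection hv s x⟩)
  simp [polarize, hux, huσx]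

lemma polarize_eventuallyEq_max {x : E} (hx : ⟪v, x⟫ < s) :
    polarize v s u =ᶠ[𝓝 x] fun y => max (u y) (u (hyperplaneReflection v s y)) := by
  have hcont : Continuous fun y : E => ⟪v, y⟫ := by fun_prop
  filter_upwards [hcont.continuousAt.eventually_lt continuousAt_const hx] with y hy
  exact if_pos hy.le

lemma polarize_eventuallyEq_min {x : E} (hx : s < ⟪v, x⟫) :
    polarize v s u =ᶠ[𝓝 x] fun y => min (u y) (u (hyperplaneReflection v s y)) := by
  have hcont : Continuous fun y : E => ⟪v, y⟫ := by fun_prop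
  filter_upwards [continuousAt_const.eventually_lt hcont.continuousAt hx] with y hy
  exact if_neg (not_le.2 hy)

lemma norm_fderiv_comp_hyperplaneReflection (v : E) (s : ℝ) (u : E → ℝ) (x : E) :
    ‖fderiv ℝ (fun y => u (hyperplaneReflection v s y)) x‖
      = ‖fderiv ℝ u (hyperplaneReflection v s x)‖ := by
  simpa only [one_smul, one_mul, hyperplaneReflection] using
    norm_fderiv_comp_similarity u ((2 * s) • v) one_pos (ℝ ∙ v)ᗮ.reflection x

variable [FiniteDimensional ℝ E] [MeasurableSpace E] [BorelSpace E] {p : ℝ}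

lemma measurePreserving_hyperplaneReflection (v : E) (s : ℝ) :
    MeasurePreserving (hyperplaneReflection v s) :=
  (measurePreserving_add_left volume ((2 * s) • v)).comp
    (ℝ ∙ v)ᗮ.reflection.measurePreserving

lemma integral_comp_hyperplaneReflection (v : E) (s : ℝ) (F : E → ℝ) :
    ∫ x, F (hyperplaneReflection v s x) = ∫ x, F x := by
  simpa only [one_smul, one_pow, inv_one, one_mul, hyperplaneReflection] using
    integral_comp_similarity F ((2 * s) • v) one_pos (ℝ ∙ v)ᗮ.reflection

lemma norm_fderiv_polarize_rpow_add_of_lt (hv : ‖v‖ = 1) (hu : LipschitzWith L u) :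
    ∀ᵐ x : E, ⟪v, x⟫ < s →
      ‖fderiv ℝ (polarize v s u) x‖ ^ p
          + ‖fderiv ℝ (polarize v s u) (hyperplaneReflection v s x)‖ ^ p
        = ‖fderiv ℝ u x‖ ^ p + ‖fderiv ℝ u (hyperplaneReflection v s x)‖ ^ p := by
  have huσ := lipschitzWith_comp_hyperplaneReflection hu v s
  filter_upwards [hu.ae_differentiableAt, huσ.ae_differentiableAt,
    (hu.max huσ).ae_differentiableAt, (hu.min huσ).ae_differentiableAt]
    with x hdu hduσ hdmax hdmin hx
  have hσx : s < ⟪v, hyperplaneReflection v s x⟫ := by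
    rw [inner_hyperplaneReflection hv]
    linarith
  rw [(polarize_eventuallyEq_max hx).fderiv_eq, (polarize_eventuallyEq_min hσx).fderiv_eq,
    ← norm_fderiv_comp_hyperplaneReflection, ← norm_fderiv_comp_hyperplaneReflection v s u x,
    ← norm_fderiv_rpow_max_add_min p hdu hduσ hdmax hdmin]
  simp only [hyperplaneReflection_hyperplaneReflection hv, min_comm]

lemma dirichletEnergy_polarize (hp : 0 < p) (hv : ‖v‖ = 1) (hu : LipschitzWith L u)
    (hc : HasCompactSupport u) :
    dirichletEnergy p (polarize v s u) = dirichletEnergy p u := by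
  have hσ := measurePreserving_hyperplaneReflection v s
  have hlt := norm_fderiv_polarize_rpow_add_of_lt (p := p) (s := s) hv hu
  have hfunctional : innerₗ E v ≠ 0 := fun h => by
    simpa [hv] using DFunLike.congr_fun h v
  have hae : ∀ᵐ x : E, ‖fderiv ℝ (polarize v s u) x‖ ^ p
        + ‖fderiv ℝ (polarize v s u) (hyperplaneReflection v s x)‖ ^ p
      = ‖fderiv ℝ u x‖ ^ p + ‖fderiv ℝ u (hyperplaneReflection v s x)‖ ^ p := by
    filter_upwards [hlt, hσ.quasiMeasurePreserving.ae hlt,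
      ae_linearMap_ne volume hfunctional s] with x hx hσx hne
    rw [innerₗ_apply_apply] at hne
    rcases lt_or_gt_of_ne hne with h | h
    · exact hx h
    · rw [hyperplaneReflection_hyperplaneReflection hv, inner_hyperplaneReflection hv] at hσx
      rw [add_comm, hσx (by linarith), add_comm]
  have hint := integrable_norm_fderiv_rpow hp hu hc
  have hint' := integrable_norm_fderiv_rpow hp (lipschitzWith_polarize (s := s) hv hu)
    (hasCompactSupport_polarize hv hc)
  have hsum (w : E → ℝ) (hw : Integrable fun x => ‖fderiv ℝ w x‖ ^ p) :
      ∫ x, (‖fderiv ℝ w x‖ ^ p + ‖fderiv ℝ w (hyperplaneReflection v s x)‖ ^ p)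
        = dirichletEnergy p w + dirichletEnergy p w :=
    (integral_add hw (hσ.integrable_comp_of_integrable hw)).trans
      (congrArg _ (integral_comp_hyperplaneReflection v s fun x => ‖fderiv ℝ w x‖ ^ p))
  linarith [hsum u hint, hsum _ hint', integral_congr_ae hae]

end Polarization

section Steiner

variable {E : Type*} [NormedAddCommGroup E] [InnerProductSpace ℝ E] {v : E} {A K : Set E}
  {u : E → ℝ} {L : ℝ≥0} {p s : ℝ}

/-- For a unit vector `v`, a set is Steiner symmetric if every line of direction `v` meets it in
a segment centred on the hyperplane `⟪v, x⟫ = 0`. -/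
def IsSteinerSymmetric (v : E) (A : Set E) : Prop :=
  ∀ x ∈ A, ∀ t : ℝ, |⟪v, x⟫ + t| ≤ |⟪v, x⟫| → x + t • v ∈ A

/-- Here `m x` is the offset, from the hyperplane `⟪v, x⟫ = 0`, of the centre of a chord of
direction `v`. Polarization reflects the offsets larger than `s` to `2 * s - m x`. -/
lemma one_le_polarize (hv : ‖v‖ = 1) (hA : IsSteinerSymmetric v A) {m : E → ℝ}
    (hm : ∀ x (t : ℝ), m (x + t • v) = m x) (hu : ∀ x ∈ A, 1 ≤ u (x + m x • v)) (s : ℝ) {x : E}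
    (hx : x ∈ A) : 1 ≤ polarize v s u (x + min (m x) (2 * s - m x) • v) := by
  have hsegment (r : ℝ) (hr : |⟪v, x⟫ + (r - m x)| ≤ |⟪v, x⟫|) : 1 ≤ u (x + r • v) := by
    simpa only [hm, add_assoc, ← add_smul, sub_add_cancel] using hu _ (hA x hx _ hr)
  have hvv : ⟪v, v⟫ = 1 := by rw [real_inner_self_eq_norm_sq, hv, one_pow]
  have hinner (r : ℝ) : ⟪v, x + r • v⟫ = ⟪v, x⟫ + r := by
    rw [inner_add_right, real_inner_smul_right, hvv, mul_one]
  have hreflect (r : ℝ) :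
      hyperplaneReflection v s (x + r • v) = x + (2 * s - 2 * ⟪v, x⟫ - r) • v := by
    rw [hyperplaneReflection_eq_add_smul hv, hinner]
    module
  rw [polarize, hreflect, hinner]
  rcases le_total (m x) s with hms | hms
  · rw [min_eq_left (by linarith)]
    have hcentre := hsegment (m x) (by rw [sub_self, add_zero])
    split_ifs with hside
    · exact le_max_of_le_left hcentre
    · refine le_min hcentre (hsegment _ ?_)
      rw [abs_of_nonneg (a := ⟪v, x⟫) (by linarith), abs_le]
      constructor <;> linarith
  · rw [min_eq_right (by linarith)]
    have hcentre := hsegment (2 * s - 2 * ⟪v, x⟫ - (2 * s - m x)) (by rw [← abs_neg]; ring_nf; rfl)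
    split_ifs with hside
    · exact le_max_of_le_right hcentre
    · refine le_min (hsegment _ ?_) hcentre
      rw [abs_of_nonneg (a := ⟪v, x⟫) (by linarith), abs_le]
      constructor <;> linarith

variable [FiniteDimensional ℝ E] [MeasurableSpace E] [BorelSpace E]

lemma exists_concentrated_centres (hp : 0 < p) (hv : ‖v‖ = 1) (hA : IsSteinerSymmetric v A)
    (hL : LipschitzWith L u) (hc : HasCompactSupport u) {m : E → ℝ}
    (hm : ∀ x (t : ℝ), m (x + t • v) = m x) {a d : ℝ} (hmem : ∀ x ∈ A, m x ∈ Icc a (a + d))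
    (hu : ∀ x ∈ A, 1 ≤ u (x + m x • v)) (n : ℕ) :
    ∃ w : E → ℝ, LipschitzWith L w ∧ HasCompactSupport w ∧
      dirichletEnergy p w = dirichletEnergy p u ∧
      ∃ m' : E → ℝ, (∀ x (t : ℝ), m' (x + t • v) = m' x) ∧
        (∀ x ∈ A, m' x ∈ Icc a (a + d / 2 ^ n)) ∧ ∀ x ∈ A, 1 ≤ w (x + m' x • v) := by
  induction n with
  | zero => exact ⟨u, hL, hc, rfl, m, hm, by simpa using hmem, hu⟩
  | succ n ih =>
    -- Polarization in the midpoint of the interval of offsets halves its length.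
    obtain ⟨w, hw, hwc, hwe, m', hm', hmem', hwu⟩ := ih
    have hd : d / 2 ^ n = 2 * (d / 2 ^ (n + 1)) := by
      rw [pow_succ]
      field_simp
    refine ⟨polarize v (a + d / 2 ^ (n + 1)) w, lipschitzWith_polarize hv hw,
      hasCompactSupport_polarize hv hwc, (dirichletEnergy_polarize hp hv hw hwc).trans hwe,
      fun x => min (m' x) (2 * (a + d / 2 ^ (n + 1)) - m' x), fun x t => by simp only [hm'],
      fun x hx => ?_, fun x hx => one_le_polarize hv hA hm' hwu _ hx⟩
    obtain ⟨hlower, hupper⟩ := hmem' x hx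
    refine ⟨le_min hlower (by linarith), ?_⟩
    rcases le_total (m' x) (a + d / 2 ^ (n + 1)) with h | h
    · exact min_le_of_left_le h
    · exact min_le_of_right_le (by linarith)

/-- The offsets concentrate at the lower end `-C` of their range, so the centred function is
recovered by a final translation by `-C • v`. -/
lemma exists_one_sub_le (hp : 0 < p) (hv : ‖v‖ = 1) (hA : IsSteinerSymmetric v A)
    (hL : LipschitzWith L u) (hc : HasCompactSupport u) {m : E → ℝ}
    (hm : ∀ x (t : ℝ), m (x + t • v) = m x) {C : ℝ} (hmC : ∀ x ∈ A, |m x| ≤ C)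
    (hu : ∀ x ∈ A, 1 ≤ u (x + m x • v)) {ε : ℝ} (hε : 0 < ε) :
    ∃ w : E → ℝ, LipschitzWith L w ∧ HasCompactSupport w ∧
      dirichletEnergy p w = dirichletEnergy p u ∧ ∀ x ∈ A, 1 - ε ≤ w x := by
  have hlim : Tendsto (fun n : ℕ => L * (2 * C / 2 ^ n)) atTop (𝓝 (L * 0)) :=
    (tendsto_const_nhds.div_atTop (tendsto_pow_atTop_atTop_of_one_lt one_lt_two)).const_mul _
  rw [mul_zero] at hlim
  obtain ⟨n, hn⟩ := (hlim.eventually_lt_const hε).exists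
  obtain ⟨w, hw, hwc, hwe, m', -, hm', hwu⟩ := exists_concentrated_centres hp hv hA hL hc hm
    (a := -C) (d := 2 * C) (fun x hx => ⟨(abs_le.1 (hmC x hx)).1, by
      linarith [(abs_le.1 (hmC x hx)).2]⟩) hu n
  refine ⟨fun x => w (-C • v + x), ?_, hwc.comp_homeomorph (Homeomorph.addLeft (-C • v)), ?_,
    fun x hx => ?_⟩
  · simpa only [mul_one, Function.comp_def] using
      hw.comp (isometry_add_left (-C • v)).lipschitz
  · rw [← hwe]
    simpa only [one_smul, one_rpow, one_mul, LinearIsometryEquiv.coe_refl, id_eq] using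
      dirichletEnergy_comp_similarity (p := p) w (-C • v) one_pos (.refl ℝ E)
  · have hdist : dist (x + m' x • v) (-C • v + x) ≤ 2 * C / 2 ^ n := by
      have hsub : x + m' x • v - (-C • v + x) = (m' x - -C) • v := by module
      rw [dist_eq_norm, hsub, norm_smul, hv, mul_one, Real.norm_of_nonneg]
      exacts [by linarith [(hm' x hx).2], sub_nonneg.2 (hm' x hx).1]
    have hlip := (le_abs_self _).trans (hw.dist_le_mul (x + m' x • v) (-C • v + x))
    have hLd := mul_le_mul_of_nonneg_left hdist L.coe_nonneg
    linarith [hwu x hx]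

/-- For `A` the Steiner symmetrization of a convex set `K` and `m x` the offset of the chord of `K`
in direction `v` on the line through `x`, this says that Steiner symmetrization does not increase
the capacity. -/
lemma variationalCapacity_le_of_centred_chords (hp : 1 ≤ p) (hv : ‖v‖ = 1)
    (hA : IsSteinerSymmetric v A) (hK : Bornology.IsBounded K) {m : E → ℝ}
    (hm : ∀ x (t : ℝ), m (x + t • v) = m x) {C : ℝ} (hmC : ∀ x ∈ A, |m x| ≤ C)
    (h : ∀ x ∈ A, x + m x • v ∈ K) :
    variationalCapacity p A ≤ variationalCapacity p K := by
  refine le_variationalCapacity hK fun u hu hc huK => ?_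
  obtain ⟨L, hL⟩ := ContDiff.lipschitzWith_of_hasCompactSupport hc hu (by simp)
  refine le_of_forall_one_lt_le_rpow_mul (q := p) fun c hc₁ => ?_
  have hc₀ : 0 < c := zero_lt_one.trans hc₁
  obtain ⟨w, hw, hwc, hwe, hwA⟩ := exists_one_sub_le (zero_lt_one.trans_le hp) hv hA hL hc hm hmC
    (fun x hx => (huK _ (h x hx)).ge) (sub_pos.2 (inv_lt_one_of_one_lt₀ hc₁))
  rw [← hwe, ← dirichletEnergy_const_mul hc₀.le]
  refine variationalCapacity_le_of_one_le hp ((lipschitzWith_smul c).comp hw) hwc.mul_left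
    fun x hx => ?_
  have hwx := mul_le_mul_of_nonneg_left (hwA x hx) hc₀.le
  rwa [sub_sub_cancel, mul_inv_cancel₀ hc₀.ne'] at hwx

end Steiner

section HexHull

variable {V W : Type*} [AddCommGroup V] [Module ℝ V] [AddCommGroup W] [Module ℝ W]

/-- The centrally symmetric hexagon with vertices `±p, ±q, ±r`, possibly degenerate. -/
def hexHull (p q r : V) : Set V := convexHull ℝ {p, q, r, -p, -q, -r}

/-- The hexagon with opposite sides `[e - f, e + f]` and `[-e - f, -e + f]` and remaining vertices
`±(s • e + t • f)`. It is used for `|s| ≤ 1 ≤ t`, when these six points are in convex position. -/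
def sideHexagon (e f : V) (s t : ℝ) : Set V := hexHull (e - f) (e + f) (s • e + t • f)

lemma convex_hexHull (p q r : V) : Convex ℝ (hexHull p q r) := convex_convexHull ℝ _

lemma left_mem_hexHull (p q r : V) : p ∈ hexHull p q r := subset_convexHull ℝ _ (by simp)

lemma middle_mem_hexHull (p q r : V) : q ∈ hexHull p q r := subset_convexHull ℝ _ (by simp)

lemma right_mem_hexHull (p q r : V) : r ∈ hexHull p q r := subset_convexHull ℝ _ (by simp)

lemma hexHull_subset {p q r : V} {C : Set V} (hC : Convex ℝ C) (hneg : ∀ x ∈ C, -x ∈ C)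
    (hp : p ∈ C) (hq : q ∈ C) (hr : r ∈ C) : hexHull p q r ⊆ C := by
  refine convexHull_min ?_ hC
  rintro x (rfl | rfl | rfl | rfl | rfl | rfl)
  exacts [hp, hq, hr, hneg _ hp, hneg _ hq, hneg _ hr]

lemma image_hexHull (f : V →ₗ[ℝ] W) (p q r : V) :
    f '' hexHull p q r = hexHull (f p) (f q) (f r) := by
  simp only [hexHull, f.image_convexHull, image_insert_eq, image_singleton, map_neg]

lemma neg_mem_hexHull {p q r x : V} (hx : x ∈ hexHull p q r) : -x ∈ hexHull p q r := by
  have hneg : -{p, q, r, -p, -q, -r} = ({p, q, r, -p, -q, -r} : Set V) := by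
    ext y
    simp only [Set.mem_neg, mem_insert_iff, mem_singleton_iff, neg_eq_iff_eq_neg, neg_neg]
    tauto
  rwa [hexHull, ← hneg, convexHull_neg, Set.neg_mem_neg]

lemma abs_le_of_mem_hexHull {p q r x : V} {c : ℝ} (hx : x ∈ hexHull p q r) (f : V →ₗ[ℝ] ℝ)
    (hp : |f p| ≤ c) (hq : |f q| ≤ c) (hr : |f r| ≤ c) : |f x| ≤ c := by
  have hsub : hexHull p q r ⊆ f ⁻¹' Icc (-c) c :=
    hexHull_subset ((convex_Icc (-c) c).linear_preimage f)
      (fun y hy => by simpa only [mem_preimage, map_neg, neg_mem_Icc_iff, neg_neg] using hy)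
      (abs_le.1 hp) (abs_le.1 hq) (abs_le.1 hr)
  exact abs_le.2 (hsub hx)

lemma image_sideHexagon (T : V →ₗ[ℝ] W) (e f : V) (s t : ℝ) :
    T '' sideHexagon e f s t = sideHexagon (T e) (T f) s t := by
  simp only [sideHexagon, image_hexHull, map_add, map_sub, map_smul]

end HexHull

lemma isBounded_hexHull {V : Type*} [NormedAddCommGroup V] [NormedSpace ℝ V] (p q r : V) :
    Bornology.IsBounded (hexHull p q r) :=
  isBounded_convexHull.2 (Set.toFinite _).isBounded

section Slices

variable {s t u y : ℝ}

/-- For `1 ≤ |y| ≤ t`, the signed relative height above the central parallelogram: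
`capHeight t y` is `0` for `|y| ≤ 1` and `±1` at the vertices `±(s • e + t • f)`. For `t = 1` there
are no caps, and division by zero gives `0`. -/
def capHeight (t y : ℝ) : ℝ := (y - max (-1) (min y 1)) / (t - 1)

lemma capHeight_of_abs_le (h : |y| ≤ 1) : capHeight t y = 0 := by
  rw [abs_le] at h
  rw [capHeight, min_eq_left h.2, max_eq_right h.1, sub_self, zero_div]

lemma capHeight_of_one_le (h : 1 ≤ y) : capHeight t y = (y - 1) / (t - 1) := by
  rw [capHeight, min_eq_right h, max_eq_right (by norm_num)]

lemma capHeight_neg (t y : ℝ) : capHeight t (-y) = -capHeight t y := by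
  rcases le_total |y| 1 with h | h
  · rw [capHeight_of_abs_le h, capHeight_of_abs_le (by rwa [abs_neg]), neg_zero]
  · rcases le_abs.1 h with h | h
    · rw [capHeight_of_one_le h, capHeight, min_eq_left (by linarith), max_eq_left (by linarith)]
      ring
    · rw [capHeight_of_one_le h, capHeight, min_eq_left (by linarith), max_eq_left (by linarith)]
      ring

lemma continuous_capHeight (t : ℝ) : Continuous (capHeight t) := by
  unfold capHeight
  fun_prop

lemma capHeight_mem_Icc (hy : 1 ≤ y) (hyt : y ≤ t) : capHeight t y ∈ Icc 0 1 := by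
  rw [capHeight_of_one_le hy]
  exact ⟨div_nonneg (by linarith) (by linarith), div_le_one_of_le₀ (by linarith) (by linarith)⟩

lemma abs_capHeight_le_one (hyt : |y| ≤ t) : |capHeight t y| ≤ 1 := by
  wlog hy : 0 ≤ y generalizing y
  · simpa only [capHeight_neg, abs_neg] using
      this (y := -y) (by rwa [abs_neg]) (by linarith)
  rcases le_total |y| 1 with h | h
  · rw [capHeight_of_abs_le h, abs_zero]
    exact zero_le_one
  · rw [abs_of_nonneg hy] at h hyt
    obtain ⟨h₀, h₁⟩ := capHeight_mem_Icc h hyt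
    rwa [abs_of_nonneg h₀]

lemma one_add_capHeight_mul (hy : 1 ≤ y) (hyt : y ≤ t) : 1 + capHeight t y * (t - 1) = y := by
  rw [capHeight_of_one_le hy, div_mul_cancel_of_imp fun h => by linarith]
  ring

/-- The set of coordinates `(u, y)` of the points `u • e + y • f` of `sideHexagon e f s t`, given
by its slices in the direction of `e`. -/
def sideHexagonCoords (s t : ℝ) : Set (ℝ × ℝ) :=
  {z | |z.2| ≤ t ∧ |z.1 - s * capHeight t z.2| ≤ 1 - |capHeight t z.2|}

lemma neg_mem_sideHexagonCoords {z : ℝ × ℝ} (hz : -z ∈ sideHexagonCoords s t) :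
    z ∈ sideHexagonCoords s t := by
  obtain ⟨hy, hu⟩ := hz
  rw [Prod.snd_neg, abs_neg] at hy
  rw [Prod.snd_neg, Prod.fst_neg, capHeight_neg, abs_neg, mul_neg, ← neg_sub', abs_neg] at hu
  exact ⟨hy, hu⟩

variable {V : Type*} [AddCommGroup V] [Module ℝ V]

lemma smul_add_smul_mem_sideHexagon (e f : V) (s t : ℝ) (hu : |u| ≤ 1) (hy : |y| ≤ 1) :
    u • e + y • f ∈ sideHexagon e f s t := by
  obtain ⟨hu₁, hu₂⟩ := abs_le.1 hu
  obtain ⟨hy₁, hy₂⟩ := abs_le.1 hy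
  have hC : Convex ℝ (sideHexagon e f s t) := convex_hexHull _ _ _
  have hp : e - f ∈ sideHexagon e f s t := left_mem_hexHull _ _ _
  have hq : e + f ∈ sideHexagon e f s t := middle_mem_hexHull _ _ _
  have hright : e + y • f ∈ sideHexagon e f s t := by
    convert hC hq hp (a := (1 + y) / 2) (b := (1 - y) / 2) (by linarith) (by linarith)
      (by ring) using 1
    module
  have hleft : -e + y • f ∈ sideHexagon e f s t := by
    convert hC (neg_mem_hexHull hp) (neg_mem_hexHull hq) (a := (1 + y) / 2) (b := (1 - y) / 2)
      (by linarith) (by linarith) (by ring) using 1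
    module
  convert hC hright hleft (a := (1 + u) / 2) (b := (1 - u) / 2) (by linarith) (by linarith)
    (by ring) using 1
  module

lemma smul_add_smul_mem_of_mem_sideHexagonCoords (e f : V)
    (h : (u, y) ∈ sideHexagonCoords s t) : u • e + y • f ∈ sideHexagon e f s t := by
  wlog hy : 0 ≤ y generalizing u y
  · have hneg := neg_mem_hexHull (this (u := -u) (y := -y)
      (neg_mem_sideHexagonCoords (by simpa using h)) (by linarith))
    rwa [show -(-u • e + -y • f) = u • e + y • f by module] at hneg
  obtain ⟨hyt, hu⟩ := h
  rcases le_total |y| 1 with hy₁ | hy₁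
  · rw [capHeight_of_abs_le hy₁, mul_zero, sub_zero, abs_zero, sub_zero] at hu
    exact smul_add_smul_mem_sideHexagon e f s t hu hy₁
  rw [abs_of_nonneg hy] at hy₁ hyt
  obtain ⟨hθ₀, hθ₁⟩ := capHeight_mem_Icc hy₁ hyt
  have hyθ := one_add_capHeight_mul hy₁ hyt
  set θ := capHeight t y
  rw [abs_of_nonneg hθ₀] at hu
  have htop : ((u - s * θ) / (1 - θ)) • e + (1 : ℝ) • f ∈ sideHexagon e f s t := by
    refine smul_add_smul_mem_sideHexagon e f s t ?_ abs_one.le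
    rw [abs_div, abs_of_nonneg (sub_nonneg.2 hθ₁)]
    exact div_le_one_of_le₀ hu (sub_nonneg.2 hθ₁)
  have hcancel : (1 - θ) * ((u - s * θ) / (1 - θ)) = u - s * θ :=
    mul_div_cancel_of_imp' fun h => abs_nonpos_iff.1 (hu.trans h.le)
  have hC : Convex ℝ (sideHexagon e f s t) := convex_hexHull _ _ _
  have hr : s • e + t • f ∈ sideHexagon e f s t := right_mem_hexHull _ _ _
  convert hC hr htop hθ₀ (sub_nonneg.2 hθ₁) (by ring) using 1
  rw [smul_add (1 - θ), smul_smul, hcancel, ← hyθ]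
  module

lemma mem_sideHexagonCoords_of_bounds (ht : 1 ≤ t) (hu : |u| ≤ 1) (hyt : |y| ≤ t)
    (hup : |(t - 1) * u + (1 - s) * y| ≤ t - s) (hdown : |(1 + s) * y - (t - 1) * u| ≤ t + s) :
    (u, y) ∈ sideHexagonCoords s t := by
  refine ⟨hyt, ?_⟩
  wlog hy : 0 ≤ y generalizing u y
  · refine (neg_mem_sideHexagonCoords (z := (u, y)) ⟨by simpa using hyt, ?_⟩).2
    refine this (u := -u) (y := -y) ?_ ?_ ?_ ?_ (by linarith) <;> rw [← abs_neg]
    exacts [by simpa using hu, by simpa using hyt, by convert hup using 2; ring,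
      by convert hdown using 2; ring]
  rcases le_total |y| 1 with hy₁ | hy₁
  · simpa only [capHeight_of_abs_le hy₁, mul_zero, sub_zero, abs_zero] using hu
  rw [abs_of_nonneg hy] at hy₁ hyt
  rcases ht.eq_or_lt with rfl | ht
  · simpa only [le_antisymm hyt hy₁, capHeight_of_abs_le abs_one.le, mul_zero, sub_zero, abs_zero]
      using hu
  obtain ⟨hθ₀, hθ₁⟩ := capHeight_mem_Icc hy₁ hyt
  have hyθ := one_add_capHeight_mul hy₁ hyt
  set θ := capHeight t y
  rw [abs_of_nonneg hθ₀]
  rw [abs_le] at hup hdown ⊢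
  constructor <;> refine le_of_mul_le_mul_left ?_ (sub_pos.2 ht) <;> nlinarith

lemma mem_sideHexagonCoords_of_mem (hs : |s| ≤ 1) (ht : 1 ≤ t) {z : ℝ × ℝ}
    (hz : z ∈ sideHexagon ((1, 0) : ℝ × ℝ) (0, 1) s t) : z ∈ sideHexagonCoords s t := by
  obtain ⟨hs₁, hs₂⟩ := abs_le.1 hs
  have hbound (a b : ℝ) {c : ℝ} (hp : |a - b| ≤ c) (hq : |a + b| ≤ c) (hr : |a * s + b * t| ≤ c) :
      |a * z.1 + b * z.2| ≤ c := by
    simpa using abs_le_of_mem_hexHull hz (a • LinearMap.fst ℝ ℝ ℝ + b • LinearMap.snd ℝ ℝ ℝ)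
      (by simpa [sub_eq_add_neg] using hp) (by simpa using hq) (by simpa using hr)
  refine mem_sideHexagonCoords_of_bounds ht ?_ ?_ (hbound (t - 1) (1 - s) ?_ ?_ ?_) ?_
  · simpa using hbound 1 0 (c := 1) (by simp) (by simp) (by simpa using hs)
  · simpa using hbound 0 1 (c := t) (by simpa using ht) (by simpa using ht)
      (by simp [abs_of_pos (zero_lt_one.trans_le ht)])
  · rw [abs_le]; constructor <;> linarith
  · rw [abs_le]; constructor <;> linarith
  · rw [abs_le]; constructor <;> nlinarith
  · rw [sub_eq_neg_add, ← neg_mul]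
    refine hbound (-(t - 1)) (1 + s) ?_ ?_ ?_ <;> rw [abs_le] <;> constructor <;> nlinarith

lemma sideHexagon_eq_image (e f : V) (hs : |s| ≤ 1) (ht : 1 ≤ t) :
    sideHexagon e f s t = (fun z : ℝ × ℝ => z.1 • e + z.2 • f) '' sideHexagonCoords s t := by
  let T : ℝ × ℝ →ₗ[ℝ] V :=
    (LinearMap.toSpanSingleton ℝ V e).coprod (LinearMap.toSpanSingleton ℝ V f)
  have hT : sideHexagon e f s t = T '' sideHexagon (1, 0) (0, 1) s t := by
    rw [image_sideHexagon]
    simp [T]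
  refine subset_antisymm ?_ ?_
  · rw [hT]
    exact image_mono fun z hz => mem_sideHexagonCoords_of_mem hs ht hz
  · rintro _ ⟨z, hz, rfl⟩
    exact smul_add_smul_mem_of_mem_sideHexagonCoords e f hz

end Slices

section Area

variable {s t : ℝ}

lemma integral_abs_capHeight (ht : 1 ≤ t) : ∫ y in (-t)..t, |capHeight t y| = t - 1 := by
  have hcont : Continuous fun y => |capHeight t y| := (continuous_capHeight t).abs
  have hmiddle : ∫ y in (0 : ℝ)..1, |capHeight t y| = 0 := by
    refine intervalIntegral.integral_zero_ae (Eventually.of_forall fun y hy => ?_)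
    rw [uIoc_of_le zero_le_one] at hy
    rw [capHeight_of_abs_le (abs_le.2 ⟨by linarith [hy.1], hy.2⟩), abs_zero]
  have hcap : ∫ y in (1 : ℝ)..t, |capHeight t y| = (t - 1) / 2 := by
    calc ∫ y in (1 : ℝ)..t, |capHeight t y|
        = ∫ y in (1 : ℝ)..t, (y - 1) / (t - 1) := by
          refine intervalIntegral.integral_congr fun y hy => ?_
          rw [uIcc_of_le ht] at hy
          rw [abs_of_nonneg (capHeight_mem_Icc hy.1 hy.2).1, capHeight_of_one_le hy.1]
      _ = (t - 1) / 2 := by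
          rw [intervalIntegral.integral_div,
            intervalIntegral.integral_comp_sub_right (fun y => y) 1, integral_id, sub_self]
          rcases ht.eq_or_lt with rfl | ht
          · simp
          · field_simp [sub_ne_zero.2 ht.ne']
            ring
  have hright : ∫ y in (0 : ℝ)..t, |capHeight t y| = (t - 1) / 2 := by
    rw [← intervalIntegral.integral_add_adjacent_intervals (b := 1)
      (hcont.intervalIntegrable _ _) (hcont.intervalIntegrable _ _), hmiddle, hcap, zero_add]
  have hleft : ∫ y in (-t)..0, |capHeight t y| = ∫ y in (0 : ℝ)..t, |capHeight t y| := by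
    simpa only [capHeight_neg, abs_neg, neg_zero] using
      (intervalIntegral.integral_comp_neg (a := 0) (b := t) fun y => |capHeight t y|).symm
  rw [← intervalIntegral.integral_add_adjacent_intervals (b := 0)
    (hcont.intervalIntegrable _ _) (hcont.intervalIntegrable _ _), hleft, hright, add_halves]

lemma isClosed_sideHexagonCoords (s t : ℝ) : IsClosed (sideHexagonCoords s t) := by
  have hcap := (continuous_capHeight t).comp (continuous_snd (X := ℝ))
  exact (isClosed_le continuous_snd.abs continuous_const).inter
    (isClosed_le (continuous_fst.sub (hcap.const_mul s)).abs (continuous_const.sub hcap.abs))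

lemma volume_slice_sideHexagonCoords (s t y : ℝ) :
    volume ((fun u => (u, y)) ⁻¹' sideHexagonCoords s t) =
      (Icc (-t) t).indicator (fun y => ENNReal.ofReal (2 * (1 - |capHeight t y|))) y := by
  by_cases hy : y ∈ Icc (-t) t
  · have hslice : (fun u => (u, y)) ⁻¹' sideHexagonCoords s t =
        closedBall (s * capHeight t y) (1 - |capHeight t y|) := by
      ext u
      simp only [sideHexagonCoords, mem_preimage, mem_ofPred_eq, abs_le.2 hy, true_and,
        mem_closedBall, Real.dist_eq]
    rw [indicator_of_mem hy, hslice, Real.volume_closedBall]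
  · have hslice : (fun u => (u, y)) ⁻¹' sideHexagonCoords s t = ∅ :=
      eq_empty_of_forall_notMem fun u hu => hy (abs_le.1 hu.1)
    rw [indicator_of_notMem hy, hslice, measure_empty]

lemma volume_sideHexagonCoords (s : ℝ) (ht : 1 ≤ t) :
    volume (sideHexagonCoords s t) = ENNReal.ofReal (2 * (1 + t)) := by
  have hcont : Continuous fun y => 2 * (1 - |capHeight t y|) :=
    continuous_const.mul (continuous_const.sub (continuous_capHeight t).abs)
  have hnonneg : ∀ y ∈ Icc (-t) t, 0 ≤ 2 * (1 - |capHeight t y|) := fun y hy =>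
    mul_nonneg two_pos.le (sub_nonneg.2 (abs_capHeight_le_one (abs_le.2 hy)))
  have harea : ∫ y in (-t)..t, 2 * (1 - |capHeight t y|) = 2 * (1 + t) := by
    rw [intervalIntegral.integral_const_mul, intervalIntegral.integral_sub
        (continuous_const.intervalIntegrable _ _)
        ((continuous_capHeight t).abs.intervalIntegrable _ _),
      integral_abs_capHeight ht, intervalIntegral.integral_const, smul_eq_mul]
    ring
  calc volume (sideHexagonCoords s t)
      = ∫⁻ y, volume ((fun u => (u, y)) ⁻¹' sideHexagonCoords s t) := by
        rw [Measure.volume_eq_prod,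
          Measure.prod_apply_symm (isClosed_sideHexagonCoords s t).measurableSet]
    _ = ∫⁻ y in Icc (-t) t, ENNReal.ofReal (2 * (1 - |capHeight t y|)) := by
        simp only [volume_slice_sideHexagonCoords]
        rw [lintegral_indicator measurableSet_Icc]
    _ = ENNReal.ofReal (∫ y in Icc (-t) t, 2 * (1 - |capHeight t y|)) :=
        (ofReal_integral_eq_lintegral_ofReal
          (hcont.continuousOn.integrableOn_compact isCompact_Icc)
          ((ae_restrict_iff' measurableSet_Icc).2 (Eventually.of_forall hnonneg))).symm
    _ = ENNReal.ofReal (2 * (1 + t)) := by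
        rw [integral_Icc_eq_integral_Ioc, ← intervalIntegral.integral_of_le (by linarith), harea]

lemma det_coprod_toSpanSingleton (a b : ℝ × ℝ) :
    ((LinearMap.toSpanSingleton ℝ (ℝ × ℝ) a).coprod (LinearMap.toSpanSingleton ℝ (ℝ × ℝ) b)).det =
      a.1 * b.2 - a.2 * b.1 := by
  rw [← LinearMap.det_toMatrix (Module.Basis.finTwoProd ℝ), Matrix.det_fin_two]
  simp [LinearMap.toMatrix_apply, mul_comm]

lemma volume_image_smul_add_smul (e f : E2) (S : Set (ℝ × ℝ)) :
    volume ((fun z : ℝ × ℝ => z.1 • e + z.2 • f) '' S) =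
      ENNReal.ofReal |det2 e f| * volume S := by
  let coords : E2 ≃ᵐ ℝ × ℝ :=
    (MeasurableEquiv.toLp 2 (Fin 2 → ℝ)).symm.trans MeasurableEquiv.finTwoArrow
  have hcoords : MeasurePreserving coords.symm :=
    ((volume_preserving_finTwoArrow ℝ).comp
      (EuclideanSpace.volume_preserving_symm_measurableEquiv_toLp (Fin 2))).symm coords
  have himage : coords.symm ⁻¹' ((fun z : ℝ × ℝ => z.1 • e + z.2 • f) '' S) =
      ((LinearMap.toSpanSingleton ℝ (ℝ × ℝ) (e 0, e 1)).coprod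
        (LinearMap.toSpanSingleton ℝ (ℝ × ℝ) (f 0, f 1))) '' S := by
    rw [← MeasurableEquiv.image_eq_preimage_symm, image_image]
    rfl
  rw [← hcoords.measure_preimage_equiv, himage, Measure.addHaar_image_linearMap,
    det_coprod_toSpanSingleton]
  rfl

lemma volume_sideHexagon (e f : E2) (hs : |s| ≤ 1) (ht : 1 ≤ t) :
    volume (sideHexagon e f s t) = ENNReal.ofReal (2 * |det2 e f| * (1 + t)) := by
  rw [sideHexagon_eq_image e f hs ht, volume_image_smul_add_smul, volume_sideHexagonCoords s ht,
    ← ENNReal.ofReal_mul (abs_nonneg _)]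
  congr 1
  ring

end Area

section SymmetrizedSideHexagon

variable {V : Type*} [NormedAddCommGroup V] [InnerProductSpace ℝ V] {e f : V} {g p s t : ℝ}

lemma isSteinerSymmetric_sideHexagon (hef : ⟪e, f⟫ = 0) (he : e ≠ 0) (ht : 1 ≤ t) :
    IsSteinerSymmetric (‖e‖⁻¹ • e) (sideHexagon e f 0 t) := by
  have hn : 0 < ‖e‖ := norm_pos_iff.2 he
  rw [sideHexagon_eq_image e f (by norm_num) ht]
  rintro _ ⟨⟨u, y⟩, ⟨hy, hu⟩, rfl⟩ r hr
  refine ⟨(u + ‖e‖⁻¹ * r, y), ⟨hy, ?_⟩, by module⟩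
  have hinner : ⟪‖e‖⁻¹ • e, u • e + y • f⟫ = ‖e‖ * u := by
    rw [real_inner_smul_left, inner_add_right, real_inner_smul_right, real_inner_smul_right, hef,
      real_inner_self_eq_norm_sq]
    field_simp
    ring
  rw [hinner, show ‖e‖ * u + r = ‖e‖ * (u + ‖e‖⁻¹ * r) by field_simp, abs_mul, abs_mul] at hr
  rw [zero_mul, sub_zero] at hu ⊢
  exact (le_of_mul_le_mul_left hr (abs_pos.2 hn.ne')).trans hu

variable [FiniteDimensional ℝ V] [MeasurableSpace V] [BorelSpace V]

lemma variationalCapacity_sideHexagon_le_of_inner_eq_zero (hp : 1 ≤ p) (hef : ⟪e, f⟫ = 0)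
    (he : e ≠ 0) (hf : f ≠ 0) (g : ℝ) (hs : |s| ≤ 1) (ht : 1 ≤ t) :
    variationalCapacity p (sideHexagon e f 0 t) ≤
      variationalCapacity p (sideHexagon e (f + g • e) s t) := by
  have hn : 0 < ‖e‖ := norm_pos_iff.2 he
  have hef' : ⟪f, e⟫ = 0 := by rw [real_inner_comm, hef]
  let y : V → ℝ := fun x => ⟪f, x⟫ / ‖f‖ ^ 2
  let m : V → ℝ := fun x => ‖e‖ * (g * y x + s * capHeight t (y x))
  have hy (u w : ℝ) : y (u • e + w • f) = w := by
    have hff : ‖f‖ ^ 2 ≠ 0 := pow_ne_zero 2 (norm_ne_zero_iff.2 hf)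
    simp only [y, inner_add_right, real_inner_smul_right, hef', mul_zero, zero_add,
      real_inner_self_eq_norm_sq, mul_div_cancel_right₀ _ hff]
  refine variationalCapacity_le_of_centred_chords hp (v := ‖e‖⁻¹ • e) (m := m)
    (C := ‖e‖ * (|g| * t + 1)) ?_ (isSteinerSymmetric_sideHexagon hef he ht)
    (isBounded_hexHull _ _ _) ?_ ?_ ?_
  · rw [norm_smul, norm_inv, norm_norm, inv_mul_cancel₀ hn.ne']
  · intro x r
    simp only [m, y, inner_add_right, real_inner_smul_right, hef', mul_zero, add_zero]
  all_goals
    rw [sideHexagon_eq_image e f (by norm_num) ht]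
    rintro _ ⟨⟨u, w⟩, ⟨hw, hu⟩, rfl⟩
    simp only [m, hy]
  · rw [abs_mul, abs_of_pos hn]
    refine mul_le_mul_of_nonneg_left ((abs_add_le _ _).trans (add_le_add ?_ ?_)) hn.le
    · rw [abs_mul]
      exact mul_le_mul_of_nonneg_left hw (abs_nonneg g)
    · rw [abs_mul]
      exact mul_le_one₀ hs (abs_nonneg _) (abs_capHeight_le_one hw)
  · rw [sideHexagon_eq_image e (f + g • e) hs ht]
    refine ⟨(u + s * capHeight t w, w), ⟨hw, ?_⟩, ?_⟩
    · simpa only [zero_mul, sub_zero, add_sub_cancel_right] using hu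
    · simp only [smul_smul, mul_right_comm ‖e‖ _ ‖e‖⁻¹, mul_inv_cancel₀ hn.ne', one_mul]
      module

end SymmetrizedSideHexagon

section Plane

variable {e f : E2} {p m s t : ℝ}

lemma det2_sq_add_inner_sq (e f : E2) : det2 e f ^ 2 + ⟪e, f⟫ ^ 2 = ‖e‖ ^ 2 * ‖f‖ ^ 2 := by
  simp only [EuclideanSpace.real_norm_sq_eq, Fin.sum_univ_two, PiLp.inner_apply, det2,
    RCLike.inner_apply, conj_trivial]
  ring

lemma abs_det2_of_inner_eq_zero (h : ⟪e, f⟫ = 0) : |det2 e f| = ‖e‖ * ‖f‖ := by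
  rw [← abs_of_nonneg (by positivity : 0 ≤ ‖e‖ * ‖f‖), ← sq_eq_sq_iff_abs_eq_abs, mul_pow,
    ← det2_sq_add_inner_sq, h]
  ring

/-- The side hexagon of `e`, `f` and `(0, t)` is symmetric in the two orthogonal directions `e` and
`f`, has area `2 * M`, and has capacity at most `m`. -/
structure IsSymmetrized (p m M : ℝ) (e f : E2) (t : ℝ) : Prop where
  inner_eq_zero : ⟪e, f⟫ = 0
  one_le : 1 ≤ t
  norm_mul_norm : ‖e‖ * ‖f‖ * (1 + t) = M
  capacity_le : variationalCapacity p (sideHexagon e f 0 t) ≤ m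

lemma exists_isSymmetrized_of_sideHexagon (hp : 1 ≤ p) (hd : det2 e f ≠ 0) (hs : |s| ≤ 1)
    (ht : 1 ≤ t) (hm : variationalCapacity p (sideHexagon e f s t) ≤ m) :
    ∃ f', IsSymmetrized p m (|det2 e f| * (1 + t)) e f' t := by
  have he : e ≠ 0 := by
    rintro rfl
    simp [det2] at hd
  obtain ⟨g, hg⟩ : ∃ g : ℝ, g = ⟪e, f⟫ / ‖e‖ ^ 2 := ⟨_, rfl⟩
  have hinner : ⟪e, f - g • e⟫ = 0 := by
    rw [inner_sub_right, real_inner_smul_right, real_inner_self_eq_norm_sq, hg,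
      div_mul_cancel₀ _ (pow_ne_zero 2 (norm_ne_zero_iff.2 he)), sub_self]
  have hdet : det2 e (f - g • e) = det2 e f := by
    simp only [det2, PiLp.sub_apply, PiLp.smul_apply, smul_eq_mul]
    ring
  have hf' : f - g • e ≠ 0 := fun h => hd (by rw [← hdet, h]; simp [det2])
  refine ⟨f - g • e, hinner, ht, by rw [← abs_det2_of_inner_eq_zero hinner, hdet], le_trans ?_ hm⟩
  simpa only [sub_add_cancel] using
    variationalCapacity_sideHexagon_le_of_inner_eq_zero hp hinner he hf' g hs ht

end Plane

section HexHullSymmetries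

variable {V : Type*} [AddCommGroup V] [Module ℝ V]

lemma hexHull_neg_left (p q r : V) : hexHull (-p) q r = hexHull p q r := by
  refine congrArg (convexHull ℝ) ?_
  ext
  simp only [mem_insert_iff, mem_singleton_iff, neg_neg]
  tauto

lemma hexHull_swap_left (p q r : V) : hexHull q p r = hexHull p q r := by
  refine congrArg (convexHull ℝ) ?_
  ext
  simp only [mem_insert_iff, mem_singleton_iff]
  tauto

lemma hexHull_neg_middle (p q r : V) : hexHull p (-q) r = hexHull p q r := by
  rw [← hexHull_swap_left, hexHull_neg_left, hexHull_swap_left]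

lemma hexHull_swap_right (p q r : V) : hexHull p r q = hexHull p q r := by
  refine congrArg (convexHull ℝ) ?_
  ext
  simp only [mem_insert_iff, mem_singleton_iff]
  tauto

lemma hexHull_eq_of_add_le_one (p q : V) {a b : ℝ} (ha : 0 ≤ a) (hb : 0 ≤ b) (hab : a + b ≤ 1) :
    hexHull p q (b • q - a • p) = hexHull p q q := by
  refine subset_antisymm (hexHull_subset (convex_hexHull _ _ _) (fun _ => neg_mem_hexHull)
    (left_mem_hexHull _ _ _) (middle_mem_hexHull _ _ _) ?_)
    (hexHull_subset (convex_hexHull _ _ _) (fun _ => neg_mem_hexHull) (left_mem_hexHull _ _ _)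
      (middle_mem_hexHull _ _ _) (middle_mem_hexHull _ _ _))
  have hC := convex_hexHull p q q
  have hp := neg_mem_hexHull (left_mem_hexHull p q q)
  have hq := middle_mem_hexHull p q q
  have h₀ : (0 : V) ∈ hexHull p q q := by
    convert hC hq (neg_mem_hexHull hq) (a := 1 / 2) (b := 1 / 2) (by norm_num) (by norm_num)
      (by norm_num) using 1
    module
  have hcomb := hC.sum_mem (t := Finset.univ) (w := ![b, a, 1 - a - b]) (z := ![q, -p, 0])
    (by simp [Fin.forall_fin_succ, ha, hb, le_sub_iff_add_le', hab])
    (by simp only [Fin.sum_univ_three, Matrix.cons_val]; ring)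
    (by simp [Fin.forall_fin_succ, h₀, hp, hq])
  simpa [Fin.sum_univ_three, sub_eq_add_neg] using hcomb

end HexHullSymmetries

section NormalForm

variable {P Q R : E2}

lemma volume_hexHull_eq_zero (hPQ : det2 P Q = 0) (hPR : det2 P R = 0) (hQR : det2 Q R = 0) :
    volume (hexHull P Q R) = 0 := by
  have hsub : hexHull P Q R ⊆ Submodule.span ℝ {P, Q, R} :=
    hexHull_subset (Submodule.convex _) (fun _ => neg_mem) (Submodule.subset_span (by simp))
      (Submodule.subset_span (by simp)) (Submodule.subset_span (by simp))
  refine measure_mono_null hsub (Measure.addHaar_submodule volume _ fun htop => ?_)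
  let det : E2 →ₗ[ℝ] E2 →ₗ[ℝ] ℝ := LinearMap.mk₂ ℝ det2
    (fun x y z => by simp only [det2, PiLp.add_apply]; ring)
    (fun c x y => by simp only [det2, PiLp.smul_apply, smul_eq_mul]; ring)
    (fun x y z => by simp only [det2, PiLp.add_apply]; ring)
    (fun c x y => by simp only [det2, PiLp.smul_apply, smul_eq_mul]; ring)
  have hdet : det = 0 := by
    refine LinearMap.ext_on htop fun x hx => LinearMap.ext_on htop fun y hy => ?_
    rcases hx with rfl | rfl | rfl <;> rcases hy with rfl | rfl | rfl <;>
      simp only [det, det2, LinearMap.mk₂_apply, LinearMap.zero_apply] at * <;> linarith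
  have hone : det !₂[1, 0] !₂[0, 1] = 1 := by simp [det, det2]
  simp [hdet] at hone

lemma exists_hexHull_smul_sub_smul_eq_sideHexagon (hd : det2 P Q ≠ 0) {a b : ℝ} (ha : |a| ≤ 1)
    (hb : |b| ≤ 1) : ∃ e f s t, det2 e f ≠ 0 ∧ |s| ≤ 1 ∧ 1 ≤ t ∧
      hexHull P Q (b • Q - a • P) = sideHexagon e f s t := by
  wlog ha₀ : 0 ≤ a generalizing P a
  · have hneg : det2 (-P) Q = -det2 P Q := by simp only [det2, PiLp.neg_apply]; ring
    simpa only [hexHull_neg_left, neg_smul_neg] using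
      this (P := -P) (a := -a) (hneg ▸ neg_ne_zero.2 hd) (by rwa [abs_neg]) (by linarith)
  wlog hb₀ : 0 ≤ b generalizing Q b
  · have hneg : det2 P (-Q) = -det2 P Q := by simp only [det2, PiLp.neg_apply]; ring
    simpa only [hexHull_neg_middle, neg_smul_neg] using
      this (Q := -Q) (b := -b) (by rwa [abs_neg]) (hneg ▸ neg_ne_zero.2 hd) (by linarith)
  have hside (b a : ℝ) : hexHull P Q (b • Q - a • P) =
      sideHexagon ((1 / 2 : ℝ) • (P + Q)) ((1 / 2 : ℝ) • (Q - P)) (b - a) (a + b) := by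
    unfold sideHexagon
    congr 1 <;> module
  have hdet : det2 ((1 / 2 : ℝ) • (P + Q)) ((1 / 2 : ℝ) • (Q - P)) ≠ 0 := by
    convert div_ne_zero hd two_ne_zero using 1
    simp only [det2, PiLp.smul_apply, PiLp.add_apply, PiLp.sub_apply, smul_eq_mul]
    ring
  rcases le_total 1 (a + b) with hab | hab
  · rw [abs_le] at ha hb
    exact ⟨_, _, _, _, hdet, abs_le.2 ⟨by linarith, by linarith⟩, hab, hside b a⟩
  · refine ⟨_, _, 1 - 0, 0 + 1, hdet, by norm_num, by norm_num, ?_⟩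
    rw [hexHull_eq_of_add_le_one P Q ha₀ hb₀ hab, ← hside, one_smul, zero_smul, sub_zero]

lemma exists_hexHull_eq_sideHexagon_of_abs_det2_le (h : volume (hexHull P Q R) ≠ 0)
    (hPR : |det2 P R| ≤ |det2 P Q|) (hQR : |det2 Q R| ≤ |det2 P Q|) :
    ∃ e f s t, det2 e f ≠ 0 ∧ |s| ≤ 1 ∧ 1 ≤ t ∧ hexHull P Q R = sideHexagon e f s t := by
  have hd : det2 P Q ≠ 0 := fun hPQ => by
    rw [hPQ, abs_zero, abs_nonpos_iff] at hPR hQR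
    exact h (volume_hexHull_eq_zero hPQ hPR hQR)
  have hR : R = (det2 P R / det2 P Q) • Q - (det2 Q R / det2 P Q) • P := by
    rw [div_eq_inv_mul, div_eq_inv_mul, mul_smul, mul_smul, ← smul_sub, eq_inv_smul_iff₀ hd]
    ext i
    fin_cases i <;> simp only [det2, PiLp.sub_apply, PiLp.smul_apply, smul_eq_mul] <;>
      dsimp only [Fin.zero_eta, Fin.mk_one] <;> ring
  rw [hR]
  refine exists_hexHull_smul_sub_smul_eq_sideHexagon hd ?_ ?_ <;>
    rw [abs_div, div_le_one (abs_pos.2 hd)] <;> assumption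

lemma abs_det2_comm (x y : E2) : |det2 x y| = |det2 y x| := by
  rw [← abs_neg, det2, det2]
  ring_nf

/-- The vertices are listed so that `P`, `Q` span the largest parallelogram: then `R` has
coordinates of absolute value at most `1` in the basis `P`, `Q`. -/
lemma exists_hexHull_eq_sideHexagon (h : volume (hexHull P Q R) ≠ 0) :
    ∃ e f s t, det2 e f ≠ 0 ∧ |s| ≤ 1 ∧ 1 ≤ t ∧ hexHull P Q R = sideHexagon e f s t := by
  rcases le_total (max |det2 P Q| |det2 P R|) |det2 Q R| with hQR | hQR
  · have hrotate : hexHull Q R P = hexHull P Q R := by rw [hexHull_swap_right, hexHull_swap_left]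
    rw [← hrotate] at h ⊢
    exact exists_hexHull_eq_sideHexagon_of_abs_det2_le h
      (abs_det2_comm Q P ▸ (le_max_left _ _).trans hQR)
      (abs_det2_comm R P ▸ (le_max_right _ _).trans hQR)
  rcases le_total |det2 P R| |det2 P Q| with hR | hR
  · rw [max_eq_left hR] at hQR
    exact exists_hexHull_eq_sideHexagon_of_abs_det2_le h hR hQR
  · rw [max_eq_right hR, abs_det2_comm] at hQR
    rw [← hexHull_swap_right] at h ⊢
    exact exists_hexHull_eq_sideHexagon_of_abs_det2_le h hR hQR

lemma exists_isSymmetrized_of_hexHull {p M : ℝ} (hp : 1 ≤ p) (hM : 0 < M)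
    (hv : volume (hexHull P Q R) = ENNReal.ofReal (2 * M)) :
    ∃ e f t, IsSymmetrized p (variationalCapacity p (hexHull P Q R)) M e f t := by
  obtain ⟨e, f, s, t, hd, hs, ht, hside⟩ := exists_hexHull_eq_sideHexagon
    (hv ▸ (ENNReal.ofReal_pos.2 (by positivity)).ne')
  obtain ⟨f', hf'⟩ := exists_isSymmetrized_of_sideHexagon hp hd hs ht
    (congrArg (variationalCapacity p) hside).ge
  have harea : 2 * M = 2 * |det2 e f| * (1 + t) := by
    rwa [hside, volume_sideHexagon e f hs ht, eq_comm,
      ENNReal.ofReal_eq_ofReal_iff (by positivity) (by positivity)] at hv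
  exact ⟨e, f', t, by rwa [show M = |det2 e f| * (1 + t) by linarith]⟩

end NormalForm

section Iteration

lemma abs_add_sq_div_sub_le {M x α : ℝ} (hM : 0 < M) (hx : M / 2 ≤ x) (hα : M / 2 ≤ α)
    (hfix : 3 * α ^ 2 = M ^ 2) : |(x + M ^ 2 / x) / 4 - α| ≤ 3 / 4 * |x - α| := by
  have hx₀ : 0 < x := by linarith
  have hα₀ : 0 < α := by linarith
  have hratio : M ^ 2 / (x * α) ≤ 4 := by
    rw [div_le_iff₀ (by positivity)]
    nlinarith
  have hdiff : (x + M ^ 2 / x) / 4 - α = (1 - M ^ 2 / (x * α)) / 4 * (x - α) := by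
    field_simp
    linear_combination (-x) * hfix
  have hratio₀ : 0 ≤ M ^ 2 / (x * α) := by positivity
  rw [hdiff, abs_mul]
  exact mul_le_mul_of_nonneg_right (abs_le.2 ⟨by linarith, by linarith⟩) (abs_nonneg _)

lemma half_le_add_sq_div {M x : ℝ} (hx : 0 < x) : M / 2 ≤ (x + M ^ 2 / x) / 4 := by
  have hsq : 0 ≤ (x - M) ^ 2 / x := by positivity
  have hexpand : (x - M) ^ 2 / x = x + M ^ 2 / x - 2 * M := by
    field_simp
    ring
  linarith

lemma tendsto_of_abs_sub_le_pow_mul {u : ℕ → ℝ} {a r C : ℝ} (hr₀ : 0 ≤ r) (hr₁ : r < 1)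
    (h : ∀ n, |u n - a| ≤ r ^ n * C) : Tendsto u atTop (𝓝 a) := by
  refine tendsto_iff_norm_sub_tendsto_zero.2 (squeeze_zero (fun _ => norm_nonneg _) h ?_)
  simpa only [zero_mul] using (tendsto_pow_atTop_nhds_zero_of_lt_one hr₀ hr₁).mul_const C

/-- Describes a symmetrized hexagon by another pair of its sides: the next symmetrization
direction is the diagonal `(1 + t) • f - e` from the vertex `e - f` to the vertex `t • f`. -/
lemma sideHexagon_eq_sideHexagon_next {V : Type*} [AddCommGroup V] [Module ℝ V] (e f : V) {t : ℝ}
    (ht : t ≠ 0) : sideHexagon e f 0 t =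
      sideHexagon ((1 / 2 : ℝ) • ((1 + t) • f - e)) ((1 / 2 : ℝ) • (e + (t - 1) • f))
        (2 / t - 1) (1 + 2 / t) := by
  have hr : (2 / t - 1) • ((1 / 2 : ℝ) • ((1 + t) • f - e)) +
      (1 + 2 / t) • ((1 / 2 : ℝ) • (e + (t - 1) • f)) = e + f := by
    match_scalars <;> field_simp <;> ring
  unfold sideHexagon
  rw [hr, ← hexHull_neg_left, ← hexHull_swap_right]
  congr 1 <;> module

namespace IsSymmetrized

variable {p m M : ℝ} {e f : E2} {t : ℝ}

lemma one_add_pos (h : IsSymmetrized p m M e f t) : 0 < 1 + t := by linarith [h.one_le]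

lemma norm_left_pos (h : IsSymmetrized p m M e f t) (hM : 0 < M) : 0 < ‖e‖ := by
  rw [← h.norm_mul_norm] at hM
  exact pos_of_mul_pos_left (pos_of_mul_pos_left hM h.one_add_pos.le) (norm_nonneg f)

lemma norm_right_eq (h : IsSymmetrized p m M e f t) (hM : 0 < M) :
    ‖f‖ = M * (1 + t)⁻¹ / ‖e‖ := by
  have he := h.norm_left_pos hM
  have ht := h.one_add_pos
  rw [← h.norm_mul_norm]
  field_simp

lemma exists_next (hp : 1 ≤ p) (hM : 0 < M) (h : IsSymmetrized p m M e f t) :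
    ∃ e' f' t', IsSymmetrized p m M e' f' t' ∧ ‖e'‖ ^ 2 = (‖e‖ ^ 2 + M ^ 2 / ‖e‖ ^ 2) / 4 ∧
      (1 + t')⁻¹ = (1 - (1 + t)⁻¹) / 2 := by
  have ht := zero_lt_one.trans_le h.one_le
  have he := h.norm_left_pos hM
  have hs : |2 / t - 1| ≤ 1 := by
    have : 2 / t ≤ 2 := div_le_self two_pos.le h.one_le
    exact abs_le.2 ⟨by linarith [div_pos two_pos ht], by linarith⟩
  have hdet : |det2 ((1 / 2 : ℝ) • ((1 + t) • f - e)) ((1 / 2 : ℝ) • (e + (t - 1) • f))| =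
      t / 2 * (‖e‖ * ‖f‖) := by
    rw [← abs_det2_of_inner_eq_zero h.inner_eq_zero, ← abs_of_pos (half_pos ht), ← abs_mul,
      ← abs_neg]
    simp only [det2, PiLp.smul_apply, PiLp.add_apply, PiLp.sub_apply, smul_eq_mul]
    ring_nf
  have hf : 0 < ‖f‖ := by
    rw [h.norm_right_eq hM]
    exact div_pos (mul_pos hM (inv_pos.2 h.one_add_pos)) he
  obtain ⟨f', hf'⟩ := exists_isSymmetrized_of_sideHexagon hp
    (abs_pos.1 (hdet.symm ▸ by positivity)) hs (le_add_of_nonneg_right (by positivity))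
    (sideHexagon_eq_sideHexagon_next e f ht.ne' ▸ h.capacity_le)
  refine ⟨(1 / 2 : ℝ) • ((1 + t) • f - e), f', 1 + 2 / t, ?_, ?_, ?_⟩
  · convert hf' using 1
    rw [hdet, ← h.norm_mul_norm]
    field_simp
    ring
  · have hinner : ⟪(1 + t) • f, e⟫ = 0 := by
      rw [real_inner_smul_left, real_inner_comm, h.inner_eq_zero, mul_zero]
    rw [norm_smul, mul_pow, norm_sub_sq_real, hinner, norm_smul, ← h.norm_mul_norm, mul_pow,
      Real.norm_eq_abs, Real.norm_eq_abs, sq_abs, sq_abs]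
    field_simp
    ring
  · have := h.one_add_pos
    field_simp
    ring

lemma exists_iterate (hp : 1 ≤ p) (hM : 0 < M) {α : ℝ} (hα : M / 2 ≤ α)
    (hfix : 3 * α ^ 2 = M ^ 2) (h : IsSymmetrized p m M e f t) (he : M / 2 ≤ ‖e‖ ^ 2) (n : ℕ) :
    ∃ e' f' t', IsSymmetrized p m M e' f' t' ∧ M / 2 ≤ ‖e'‖ ^ 2 ∧
      |‖e'‖ ^ 2 - α| ≤ (3 / 4) ^ n * |‖e‖ ^ 2 - α| ∧
      |(1 + t')⁻¹ - 1 / 3| ≤ (1 / 2) ^ n * |(1 + t)⁻¹ - 1 / 3| := by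
  induction n with
  | zero => exact ⟨e, f, t, h, he, by simp, by simp⟩
  | succ n ih =>
    obtain ⟨e₁, f₁, t₁, h₁, he₁, hx₁, hσ₁⟩ := ih
    obtain ⟨e₂, f₂, t₂, h₂, hx₂, hσ₂⟩ := h₁.exists_next hp hM
    have hx := abs_add_sq_div_sub_le hM he₁ hα hfix
    have hσ : |(1 - (1 + t₁)⁻¹) / 2 - 1 / 3| = 1 / 2 * |(1 + t₁)⁻¹ - 1 / 3| := by
      rw [show (1 - (1 + t₁)⁻¹) / 2 - 1 / 3 = -(1 / 2) * ((1 + t₁)⁻¹ - 1 / 3) by ring, abs_mul,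
        abs_neg, abs_of_pos one_half_pos]
    refine ⟨e₂, f₂, t₂, h₂, ?_, ?_, ?_⟩
    · rw [hx₂]
      exact half_le_add_sq_div (by linarith)
    · rw [hx₂, pow_succ' (3 / 4 : ℝ), mul_assoc]
      exact hx.trans (mul_le_mul_of_nonneg_left hx₁ (by norm_num))
    · rw [hσ₂, hσ, pow_succ', mul_assoc]
      exact mul_le_mul_of_nonneg_left hσ₁ one_half_pos.le

lemma exists_tendsto_regular (hp : 1 ≤ p) {η : ℝ} (hη : 0 < η)
    (h : IsSymmetrized p m (3 * √3 * η ^ 2) e f t) :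
    ∃ (e f : ℕ → E2) (t : ℕ → ℝ), (∀ n, IsSymmetrized p m (3 * √3 * η ^ 2) (e n) (f n) (t n)) ∧
      Tendsto (fun n => ‖e n‖) atTop (𝓝 (√3 * η)) ∧ Tendsto (fun n => ‖f n‖) atTop (𝓝 η) ∧
      Tendsto (fun n => t n * ‖f n‖) atTop (𝓝 (2 * η)) := by
  have h3 : √3 ^ 2 = 3 := sq_sqrt (by norm_num)
  set M := 3 * √3 * η ^ 2 with hM_def
  have hM : 0 < M := by positivity
  obtain ⟨e₀, f₀, t₀, h₀, hx₀, -⟩ := h.exists_next hp hM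
  have he₀ : M / 2 ≤ ‖e₀‖ ^ 2 := hx₀ ▸ half_le_add_sq_div (pow_pos (h.norm_left_pos hM) 2)
  have hα : M / 2 ≤ (√3 * η) ^ 2 := by
    have : √3 ≤ 2 := sqrt_le_iff.2 ⟨by norm_num, by norm_num⟩
    rw [hM_def, mul_pow, h3]
    nlinarith [sq_nonneg η]
  have hfix : 3 * ((√3 * η) ^ 2) ^ 2 = M ^ 2 := by
    rw [hM_def]
    linear_combination (3 * η ^ 4 * √3 ^ 2) * h3
  choose e f t hsymm _ hx hσ using h₀.exists_iterate hp hM hα hfix he₀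
  have hsq : Tendsto (fun n => ‖e n‖ ^ 2) atTop (𝓝 ((√3 * η) ^ 2)) :=
    tendsto_of_abs_sub_le_pow_mul (by norm_num) (by norm_num) hx
  have he : Tendsto (fun n => ‖e n‖) atTop (𝓝 (√3 * η)) := by
    simpa only [sqrt_sq (norm_nonneg _), sqrt_sq (by positivity : 0 ≤ √3 * η)] using hsq.sqrt
  have hf : Tendsto (fun n => ‖f n‖) atTop (𝓝 η) := by
    have hlim := ((tendsto_of_abs_sub_le_pow_mul (by norm_num) (by norm_num) hσ).const_mul M).div
      he (by positivity)
    rw [hM_def, show 3 * √3 * η ^ 2 * (1 / 3) / (√3 * η) = η by field_simp] at hlim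
    exact hlim.congr fun n => ((hsymm n).norm_right_eq hM).symm
  have ht : Tendsto (fun n => t n * ‖f n‖) atTop (𝓝 (2 * η)) := by
    have hlim : Tendsto (fun n => M / ‖e n‖ - ‖f n‖) atTop (𝓝 (M / (√3 * η) - η)) :=
      (tendsto_const_nhds.div he (by positivity)).sub hf
    rw [show M / (√3 * η) - η = 2 * η by rw [hM_def]; field_simp; ring] at hlim
    refine hlim.congr fun n => ?_
    have hen := (hsymm n).norm_left_pos hM
    rw [← (hsymm n).norm_mul_norm]
    field_simp
    ring
  exact ⟨e, f, t, hsymm, he, hf, ht⟩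

lemma exists_near_regular (hp : 1 ≤ p) {η c : ℝ} (hη : 0 < η) (hc : 1 < c)
    (h : IsSymmetrized p m (3 * √3 * η ^ 2) e f t) :
    ∃ e' f' t', IsSymmetrized p m (3 * √3 * η ^ 2) e' f' t' ∧
      √3 * η < c * ‖e'‖ ∧ η < c * ‖f'‖ ∧ 2 * η < c * (t' * ‖f'‖) := by
  obtain ⟨e, f, t, hsymm, he, hf, ht⟩ := h.exists_tendsto_regular hp hη
  have hscale {a : ℝ} (ha : 0 < a) : a < c * a := lt_mul_of_one_lt_left ha hc
  obtain ⟨n, hen, hfn, htn⟩ := (((he.const_mul c).eventually_const_lt (hscale (by positivity))).and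
    (((hf.const_mul c).eventually_const_lt (hscale hη)).and
      ((ht.const_mul c).eventually_const_lt (hscale (by positivity))))).exists
  exact ⟨e n, f n, t n, hsymm n, hen, hfn, htn⟩

end IsSymmetrized

end Iteration

section Comparison

lemma exists_linearIsometryEquiv_of_orthogonal {V ι : Type*} [NormedAddCommGroup V]
    [InnerProductSpace ℝ V] [FiniteDimensional ℝ V] [Fintype ι]
    (hcard : Module.finrank ℝ V = Fintype.card ι) {v w : ι → V} (hv : ∀ i, v i ≠ 0)
    (hw : ∀ i, w i ≠ 0) (hvv : Pairwise fun i j => ⟪v i, v j⟫ = 0)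
    (hww : Pairwise fun i j => ⟪w i, w j⟫ = 0) :
    ∃ T : V ≃ₗᵢ[ℝ] V, ∀ i, T (v i) = (‖v i‖ / ‖w i‖) • w i := by
  have hbasis {x : ι → V} (hx : ∀ i, x i ≠ 0) (hxx : Pairwise fun i j => ⟪x i, x j⟫ = 0) :
      ∃ b : OrthonormalBasis ι ℝ V, ∀ i, x i = ‖x i‖ • b i := by
    have hon : Orthonormal ℝ fun i => ‖x i‖⁻¹ • x i :=
      ⟨fun i => norm_smul_inv_norm (𝕜 := ℝ) (hx i), fun i j hij => by
        simp only [real_inner_smul_left, real_inner_smul_right, hxx hij, mul_zero]⟩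
    obtain ⟨b, hb⟩ := Orthonormal.exists_orthonormalBasis_extension_of_card_eq hcard
      (v := fun i => ‖x i‖⁻¹ • x i) (s := univ) (hon.comp Subtype.val Subtype.val_injective)
    exact ⟨b, fun i => by rw [hb i trivial, smul_inv_smul₀ (norm_ne_zero_iff.2 (hx i))]⟩
  obtain ⟨a, ha⟩ := hbasis hv hvv
  obtain ⟨b, hb⟩ := hbasis hw hww
  refine ⟨a.equiv b (Equiv.refl ι), fun i => ?_⟩
  have hbi : b i = ‖w i‖⁻¹ • w i := by
    rw [eq_inv_smul_iff₀ (norm_ne_zero_iff.2 (hw i)), ← hb]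
  rw [div_eq_mul_inv, mul_smul, ← hbi]
  conv_lhs => rw [ha i, map_smul, OrthonormalBasis.equiv_apply_basis, Equiv.refl_apply]

lemma exists_linearIsometryEquiv_of_inner_eq_zero {e f e' f' : E2} (h : ⟪e, f⟫ = 0)
    (h' : ⟪e', f'⟫ = 0) (he : e ≠ 0) (hf : f ≠ 0) (he' : e' ≠ 0) (hf' : f' ≠ 0) :
    ∃ T : E2 ≃ₗᵢ[ℝ] E2, T e = (‖e‖ / ‖e'‖) • e' ∧ T f = (‖f‖ / ‖f'‖) • f' := by
  have hpair {x y : E2} (hxy : ⟪x, y⟫ = 0) :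
      Pairwise fun i j => ⟪![x, y] i, ![x, y] j⟫ = 0 := by
    intro i j hij
    fin_cases i <;> fin_cases j <;> simp_all [real_inner_comm]
  obtain ⟨T, hT⟩ := exists_linearIsometryEquiv_of_orthogonal (finrank_euclideanSpace (𝕜 := ℝ))
    (v := ![e, f]) (w := ![e', f']) (Fin.forall_fin_two.2 ⟨he, hf⟩)
    (Fin.forall_fin_two.2 ⟨he', hf'⟩) (hpair h) (hpair h')
  exact ⟨T, hT 0, hT 1⟩

lemma sideHexagon_smul_smul_subset {V : Type*} [AddCommGroup V] [Module ℝ V] (e f : V)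
    {t u y τ : ℝ} (hu : |u| ≤ 1) (hy : |y| ≤ 1) (ht : 0 < t) (hτ : 0 ≤ τ * y) (hτt : τ * y ≤ t) :
    sideHexagon (u • e) (y • f) 0 τ ⊆ sideHexagon e f 0 t := by
  have hC : Convex ℝ (sideHexagon e f 0 t) := convex_hexHull _ _ _
  have hzero : (0 : V) ∈ sideHexagon e f 0 t := by
    simpa only [zero_smul, add_zero] using
      smul_add_smul_mem_sideHexagon e f 0 t (u := 0) (y := 0) (by simp) (by simp)
  refine hexHull_subset hC (fun _ => neg_mem_hexHull) ?_
    (smul_add_smul_mem_sideHexagon e f 0 t hu hy) ?_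
  · simpa only [neg_smul, ← sub_eq_add_neg] using
      smul_add_smul_mem_sideHexagon e f 0 t hu ((abs_neg y).trans_le hy)
  · have hvertex : (0 : ℝ) • e + t • f ∈ sideHexagon e f 0 t := right_mem_hexHull _ _ _
    convert hC.smul_mem_of_zero_mem hzero hvertex
      ⟨div_nonneg hτ ht.le, div_le_one_of_le₀ hτt ht.le⟩ using 1
    match_scalars <;> field_simp
    ring

lemma IsSymmetrized.variationalCapacity_regular_le {p m η t : ℝ} {e f e₀ f₀ : E2} (hp : 1 ≤ p)
    (hη : 0 < η) (h : IsSymmetrized p m (3 * √3 * η ^ 2) e f t) (h₀ : ⟪e₀, f₀⟫ = 0)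
    (he₀ : ‖e₀‖ = √3 * η) (hf₀ : ‖f₀‖ = η) :
    variationalCapacity p (sideHexagon e₀ f₀ 0 2) ≤ m := by
  refine le_of_forall_one_lt_le_rpow_mul (q := 2 - p) fun c hc => ?_
  have hc₀ : 0 < c := zero_lt_one.trans hc
  obtain ⟨e', f', t', h', he', hf', ht'⟩ := h.exists_near_regular hp hη hc
  have hen : 0 < ‖e'‖ := h'.norm_left_pos (by positivity)
  have hfn : 0 < ‖f'‖ := pos_of_mul_pos_right (hη.trans hf') hc₀.le
  obtain ⟨T, hTe, hTf⟩ := exists_linearIsometryEquiv_of_inner_eq_zero h₀ h'.inner_eq_zero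
    (norm_pos_iff.1 (he₀ ▸ by positivity)) (norm_pos_iff.1 (hf₀ ▸ hη)) (norm_pos_iff.1 hen)
    (norm_pos_iff.1 hfn)
  let L : E2 →ₗ[ℝ] E2 := c⁻¹ • T.toLinearEquiv.toLinearMap
  have hL (x : E2) : L x = c⁻¹ • T x := rfl
  have hsub : L '' sideHexagon e₀ f₀ 0 2 ⊆ sideHexagon e' f' 0 t' := by
    rw [image_sideHexagon, hL, hL, hTe, hTf, he₀, hf₀, smul_smul, smul_smul]
    refine sideHexagon_smul_smul_subset e' f' ?_ ?_ (zero_lt_one.trans_le h'.one_le)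
      (by positivity) ?_
    · rw [abs_of_nonneg (by positivity), inv_mul_le_one₀ hc₀, div_le_iff₀ hen]
      exact he'.le
    · rw [abs_of_nonneg (by positivity), inv_mul_le_one₀ hc₀, div_le_iff₀ hfn]
      exact hf'.le
    · field_simp
      linarith
  calc variationalCapacity p (sideHexagon e₀ f₀ 0 2)
      ≤ c⁻¹ ^ (p - Module.finrank ℝ E2) * variationalCapacity p (sideHexagon e' f' 0 t') :=
        variationalCapacity_le_of_mapsTo (isBounded_hexHull _ _ _) 0 (inv_pos.2 hc₀) T
          fun y hy => by simpa only [zero_add, hL] using hsub (mem_image_of_mem _ hy)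
    _ = c ^ (2 - p) * variationalCapacity p (sideHexagon e' f' 0 t') := by
        rw [finrank_euclideanSpace_fin, Real.inv_rpow hc₀.le, ← Real.rpow_neg hc₀.le, neg_sub,
          Nat.cast_ofNat]
    _ ≤ c ^ (2 - p) * m := by
        gcongr
        exact h'.capacity_le

end Comparison

section RegularHexagon

lemma hexVertex_add_three (k : ℕ) : hexVertex (k + 3) = -hexVertex k := by
  have hangle : ((k + 3 : ℕ) : ℝ) * π / 3 = k * π / 3 + π := by
    push_cast
    ring
  rw [hexVertex, hangle, Real.cos_add_pi, Real.sin_add_pi]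
  ext i
  fin_cases i <;> simp [hexVertex]

lemma stdHexagon_eq_hexHull : stdHexagon = hexHull (hexVertex 2) (hexVertex 1) (hexVertex 0) := by
  have hneg (k : ℕ) : -hexVertex k = hexVertex (k + 3) := (hexVertex_add_three k).symm
  refine congrArg (convexHull ℝ) ?_
  ext x
  simp only [mem_range, Fin.exists_fin_succ, mem_insert_iff, mem_singleton_iff, hneg]
  norm_num
  simp only [eq_comm (b := x)]
  tauto

lemma stdHexagon_eq_sideHexagon :
    stdHexagon = sideHexagon !₂[0, √3 / 2] !₂[1 / 2, 0] 0 2 := by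
  have htwo : hexVertex 2 = !₂[-(1 / 2), √3 / 2] := by
    rw [hexVertex, show ((2 : ℕ) : ℝ) * π / 3 = π - π / 3 by push_cast; ring, Real.cos_pi_sub,
      Real.sin_pi_sub, Real.cos_pi_div_three, Real.sin_pi_div_three]
    rfl
  rw [stdHexagon_eq_hexHull, htwo, sideHexagon]
  congr 1 <;> ext i <;> fin_cases i <;> simp [hexVertex]

lemma exists_similarity_eq_add_smul {V : Type*} [NormedAddCommGroup V] [InnerProductSpace ℝ V]
    [FiniteDimensional ℝ V] {f : V → V} {s : ℝ} (hs : 0 < s)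
    (hf : ∀ x y, dist (f x) (f y) = s * dist x y) :
    ∃ T : V ≃ₗᵢ[ℝ] V, ∀ x, f x = f 0 + s • T x := by
  have hisometry : Isometry fun x => s⁻¹ • f x := Isometry.of_dist_eq fun x y => by
    rw [dist_smul₀, hf, norm_inv, Real.norm_of_nonneg hs.le, inv_mul_cancel_left₀ hs.ne']
  let F := hisometry.affineIsometryOfStrictConvexSpace
  refine ⟨F.linearIsometry.toLinearIsometryEquiv rfl, fun x => ?_⟩
  have hF (x : V) : F x = s⁻¹ • f x := rfl
  have hlinear : s⁻¹ • f x = F.linearIsometry x + s⁻¹ • f 0 := by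
    simpa only [vadd_eq_add, add_zero, hF] using F.map_vadd 0 x
  rw [LinearIsometry.coe_toLinearIsometryEquiv, ← smul_inv_smul₀ hs.ne' (f x), hlinear, smul_add,
    smul_inv_smul₀ hs.ne', add_comm]

lemma IsRegularHexagon.exists_eq_add_sideHexagon {H : Set E2} (hH : IsRegularHexagon H) :
    ∃ (c e f : E2) (η : ℝ), 0 < η ∧ ⟪e, f⟫ = 0 ∧ ‖e‖ = √3 * η ∧ ‖f‖ = η ∧
      H = (c + ·) '' sideHexagon e f 0 2 := by
  obtain ⟨f, ⟨s, hs, hf⟩, rfl⟩ := hH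
  obtain ⟨T, hT⟩ := exists_similarity_eq_add_smul hs hf
  have hnorm (x : E2) : ‖s • T x‖ = s * ‖x‖ := by
    rw [norm_smul, T.norm_map, Real.norm_of_nonneg hs.le]
  refine ⟨f 0, s • T !₂[0, √3 / 2], s • T !₂[1 / 2, 0], s / 2, half_pos hs, ?_, ?_, ?_, ?_⟩
  · rw [real_inner_smul_left, real_inner_smul_right, T.inner_map_map]
    simp [PiLp.inner_apply]
  · have hheight : ‖(!₂[0, √3 / 2] : E2)‖ = √3 / 2 := by
      rw [EuclideanSpace.norm_eq, Real.sqrt_eq_iff_eq_sq (by positivity) (by positivity)]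
      simp
    rw [hnorm, hheight]
    ring
  · have hwidth : ‖(!₂[1 / 2, 0] : E2)‖ = 1 / 2 := by simp [EuclideanSpace.norm_eq]
    rw [hnorm, hwidth]
    ring
  · rw [← LinearIsometryEquiv.coe_toLinearEquiv, ← LinearEquiv.coe_coe, ← LinearMap.smul_apply,
      ← LinearMap.smul_apply, ← image_sideHexagon, image_image, ← stdHexagon_eq_sideHexagon]
    exact image_congr fun x _ => hT x

end RegularHexagon

theorem statement14_general (p : ℝ) (hp : 1 ≤ p) (Hstar : Set E2) (hreg : IsRegularHexagon Hstar) :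
    ∀ H : Set E2, Hex H → volume H = volume Hstar → pCapacity p Hstar ≤ pCapacity p H := by
  rintro _ ⟨⟨x₀, P, Q, R, rfl⟩, -⟩ hv
  obtain ⟨c, e, f, η, hη, hef, he, hf, rfl⟩ := hreg.exists_eq_add_sideHexagon
  change volume ((x₀ + ·) '' hexHull P Q R) = _ at hv
  have harea : 2 * |det2 e f| * (1 + 2) = 2 * (3 * √3 * η ^ 2) := by
    rw [abs_det2_of_inner_eq_zero hef, he, hf]
    ring
  rw [volume_image_add_left, volume_image_add_left, volume_sideHexagon e f (by norm_num)
    one_le_two, harea] at hv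
  obtain ⟨e', f', t, h⟩ := exists_isSymmetrized_of_hexHull hp (by positivity) hv
  calc variationalCapacity p ((c + ·) '' sideHexagon e f 0 2)
      = variationalCapacity p (sideHexagon e f 0 2) :=
        variationalCapacity_image_add_left p (isBounded_hexHull _ _ _) c
    _ ≤ variationalCapacity p (hexHull P Q R) := h.variationalCapacity_regular_le hp hη hef he hf
    _ = variationalCapacity p ((x₀ + ·) '' hexHull P Q R) :=
        (variationalCapacity_image_add_left p (isBounded_hexHull _ _ _) x₀).symm

/-- For `p ∈ (1,2)`, among convex polygons of unit area tiling the plane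
by translations, the regular hexagon minimizes the variational `p`-capacity. -/
theorem statement14 (p : ℝ) (hp : p ∈ Set.Ioo (1 : ℝ) 2)
    (Hstar : Set E2) (hreg : IsRegularHexagon Hstar) (hvolstar : volume Hstar = 1) :
    ∀ H : Set E2, Hex H → volume H = 1 → pCapacity p Hstar ≤ pCapacity p H :=
  fun H hH hv => statement14_general p hp.1.le Hstar hreg H hH (hv.trans hvolstar.symm)
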